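/- Let z ∈ C^{0,1}([0,T];Z) be a differential solution of the rate-independent system, let I be locally κ-uniformly convex around z with radius Δ > 0, assume ℓ ∈ W^{1,∞}([0,T];V) with |ℓ|_Lip ≤ κ − δ for some δ ∈ (0,κ] and ℓ′ ∈ BV([0,T];V), and assume I(t,·) ∈ C^{2,1}_loc(Z;ℝ). Then there exist a constant K_loc > 0 and a threshold τ̄ > 0, both independent of τ, such that for every step size τ ≤ τ̄ the back-transformed discrete parameterized solution z_τ of the local incremental minimization scheme satisfies ‖z_τ(t) − z(t)‖_Z ≤ K_loc τ for all t ∈ [0,T]. -/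

import Mathlib

open MeasureTheory
open scoped RealInnerProductSpace NNReal

noncomputable section

namespace RIS

variable {Z V X : Type*}
  [NormedAddCommGroup Z] [InnerProductSpace ℝ Z] [CompleteSpace Z]
  [NormedAddCommGroup V] [InnerProductSpace ℝ V] [CompleteSpace V]
  [NormedAddCommGroup X] [NormedSpace ℝ X]

/-- The convex subdifferential of `R : V → ℝ` at `u`, as a subset of the dual `V →L[ℝ] ℝ`. -/
def subdiff (R : V → ℝ) (u : V) : Set (V →L[ℝ] ℝ) :=
  {ξ | ∀ v : V, R u + ξ (v - u) ≤ R v}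

/-- The semilinear energy `I(t,z) = ½⟨Az,z⟩ + F(z) − ⟨ℓ(t), z⟩`. -/
def energy (A : Z →L[ℝ] Z →L[ℝ] ℝ) (F : Z → ℝ) (ℓ : ℝ → V →L[ℝ] ℝ)
    (ι : Z →L[ℝ] V) (t : ℝ) (z : Z) : ℝ :=
  (1 / 2 : ℝ) * A z z + F z - ℓ t (ι z)

/-- `D_z I(t,z) = Az + D_zF(z) − ℓ(t)`, as an element of `Z*` (here `D_zF(z)` and `ℓ(t)`
are elements of `V*`, composed with the embedding `ι : Z ↪ V`). -/
def DI (A : Z →L[ℝ] Z →L[ℝ] ℝ) (DF : Z → V →L[ℝ] ℝ) (ℓ : ℝ → V →L[ℝ] ℝ)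
    (ι : Z →L[ℝ] V) (t : ℝ) (z : Z) : Z →L[ℝ] ℝ :=
  A z + (DF z).comp ι - (ℓ t).comp ι

/-- Local stability: `0 ∈ ∂R(0) + D_z I(t,z)`. -/
def LocStable (R : V → ℝ) (A : Z →L[ℝ] Z →L[ℝ] ℝ) (DF : Z → V →L[ℝ] ℝ)
    (ℓ : ℝ → V →L[ℝ] ℝ) (ι : Z →L[ℝ] V) (t : ℝ) (z : Z) : Prop :=
  ∃ ξ ∈ subdiff R 0, ξ.comp ι + DI A DF ℓ ι t z = 0

/-- The local incremental minimization scheme with step size `τ`: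
`z_{k+1}` minimizes `I(t_k, ·) + R(· − z_k)` over the ball `‖· − z_k‖_V ≤ τ`
and `t_{k+1} = min{t_k + τ − ‖z_{k+1} − z_k‖_V, T}`, starting from `t_0 = 0`, `z_0 = z₀`. -/
def Scheme (A : Z →L[ℝ] Z →L[ℝ] ℝ) (F : Z → ℝ) (R : V → ℝ) (ℓ : ℝ → V →L[ℝ] ℝ)
    (ι : Z →L[ℝ] V) (T τ : ℝ) (z₀ : Z) (t : ℕ → ℝ) (z : ℕ → Z) : Prop :=
  t 0 = 0 ∧ z 0 = z₀ ∧
    ∀ k : ℕ,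
      ‖ι (z (k + 1) - z k)‖ ≤ τ ∧
      (∀ w : Z, ‖ι (w - z k)‖ ≤ τ →
        energy A F ℓ ι (t k) (z (k + 1)) + R (ι (z (k + 1) - z k)) ≤
          energy A F ℓ ι (t k) w + R (ι (w - z k))) ∧
      t (k + 1) = min (t k + τ - ‖ι (z (k + 1) - z k)‖) T

/-- Standing assumptions on the data of the rate-independent system. -/
def StandingAssumptions (ι : Z →L[ℝ] V) (ιX : V →L[ℝ] X)
    (A : Z →L[ℝ] Z →L[ℝ] ℝ) (α : ℝ) (F : Z → ℝ) (DF : Z → V →L[ℝ] ℝ)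
    (D2F : Z → Z →L[ℝ] V →L[ℝ] ℝ) (R : V → ℝ) (ℓ : ℝ → V →L[ℝ] ℝ)
    (L T : ℝ) : Prop :=
  Function.Injective (ι : Z → V) ∧ DenseRange (ι : Z → V) ∧ (∀ w : Z, ‖ι w‖ ≤ ‖w‖) ∧
  Function.Injective (ιX : V → X) ∧
  (∀ z w : Z, A z w = A w z) ∧ 0 < α ∧ (∀ w : Z, α * ‖w‖ ^ 2 ≤ A w w) ∧
  (∀ w : Z, 0 ≤ F w) ∧
  (∀ w : Z, HasFDerivAt F ((DF w).comp ι) w) ∧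
  (∀ w : Z, HasFDerivAt DF (D2F w) w) ∧
  (∃ CF q : ℝ, 0 < CF ∧ 1 ≤ q ∧ ∀ w v : Z, ‖D2F w v‖ ≤ CF * (1 + ‖w‖ ^ q) * ‖v‖) ∧
  0 ≤ L ∧ LipschitzOnWith (Real.toNNReal L) ℓ (Set.Icc 0 T) ∧ 0 < T ∧
  ConvexOn ℝ Set.univ R ∧ LowerSemicontinuous R ∧ (∀ v : V, 0 ≤ R v) ∧
  (∀ (c : ℝ) (v : V), 0 ≤ c → R (c • v) = c * R v) ∧
  (∃ ρ₁ ρ₂ : ℝ, 0 < ρ₁ ∧ 0 < ρ₂ ∧ ∀ v : V, ρ₁ * ‖ιX v‖ ≤ R v ∧ R v ≤ ρ₂ * ‖v‖)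

/-- `κ`-uniform convexity of the energy: `⟨D²_zI(t,z)v,v⟩ ≥ κ‖v‖²_Z`, where
`D²_zI(t,z)[v,v] = ⟨Av,v⟩ + ⟨D²F(z)v, v⟩`. -/
def UniformlyConvex (A : Z →L[ℝ] Z →L[ℝ] ℝ) (D2F : Z → Z →L[ℝ] V →L[ℝ] ℝ)
    (ι : Z →L[ℝ] V) (κ : ℝ) : Prop :=
  0 < κ ∧ ∀ w v : Z, κ * ‖v‖ ^ 2 ≤ A v v + D2F w v (ι v)

/-- A differential solution of the rate-independent system: `y ∈ W^{1,1}(0,T;Z)`,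
`y(0) = z₀` and `0 ∈ ∂R(y'(t)) + D_zI(t, y(t))` for a.e. `t ∈ (0,T)`. -/
def IsDiffSol (A : Z →L[ℝ] Z →L[ℝ] ℝ) (DF : Z → V →L[ℝ] ℝ) (ℓ : ℝ → V →L[ℝ] ℝ)
    (R : V → ℝ) (ι : Z →L[ℝ] V) (T : ℝ) (z₀ : Z) (y : ℝ → Z) : Prop :=
  y 0 = z₀ ∧
  ∃ y' : ℝ → Z,
    IntervalIntegrable y' volume 0 T ∧
    (∀ s ∈ Set.Icc (0 : ℝ) T, y s = z₀ + ∫ r in (0 : ℝ)..s, y' r) ∧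
    (∀ᵐ s ∂(volume.restrict (Set.Ioo (0 : ℝ) T)),
      ∃ ξ ∈ subdiff R (ι (y' s)), ξ.comp ι + DI A DF ℓ ι s (y s) = 0)

/-!
Let `G x = Ax + D_zF(x)`. Along the affine interpolant `x` of the scheme and the solution `y`, the
symmetrized Bregman distance `⟨G x - G y, x - y⟩` dominates `κ‖x - y‖²` as long as `x` stays in the
tube of radius `Δ`. The Lipschitz bound on `D²_zI` and the monotonicity of the flow rule give a
Gronwall inequality for it, whose source is the defect of the discrete flow rule. Over one step this
defect is at most the step length times the increment of `⟨ℓ', v⟩ - ½⟨D²_zI v, v⟩` along the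
discrete rates `v`, up to terms controlled by the step length and the variation of `ℓ'`. These
increments telescope, so the squared error is of order `τ²`.

That the scheme stays in the tube, and that its constraint `‖z_k - z_{k-1}‖_V ≤ τ` is inactive, is
propagated along with the error bound. Coercivity of the energy makes the increments small for small
`τ`, and in the tube an increment between stable states has norm at most `|ℓ|_Lip / κ < 1` times
the time step.
-/

section Calculus

variable {E W : Type*} [NormedAddCommGroup E] [NormedSpace ℝ E]
  [NormedAddCommGroup W] [NormedSpace ℝ W]

lemma apply_le_mul_of_norm_le {f : E →L[ℝ] ℝ} {v : E} {C r : ℝ} (hf : ‖f‖ ≤ C) (hv : ‖v‖ ≤ r) :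
    f v ≤ C * r :=
  (Real.le_norm_self _).trans (f.le_of_opNorm_le_of_le hf hv)

lemma sub_le_mul_sub_of_ae_hasDerivAt_le {f : ℝ → ℝ} {a c B : ℝ} (hac : a ≤ c)
    (hf : AbsolutelyContinuousOnInterval f a c)
    (hd : ∀ᵐ t : ℝ, t ∈ Set.Ioo a c → ∃ f', HasDerivAt f f' t ∧ f' ≤ B) :
    f c - f a ≤ B * (c - a) := by
  have deriv_le : ∀ᵐ t ∂volume.restrict (Set.Icc a c), deriv f t ≤ B := by
    rw [← restrict_Ioo_eq_restrict_Icc, ae_restrict_iff' measurableSet_Ioo]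
    filter_upwards [hd] with t ht htI
    obtain ⟨f', hf', hle⟩ := ht htI
    exact hf'.deriv.trans_le hle
  calc f c - f a = ∫ t in a..c, deriv f t := hf.integral_deriv_eq_sub.symm
    _ ≤ ∫ _ in a..c, B :=
      intervalIntegral.integral_mono_ae_restrict hac hf.intervalIntegrable_deriv
        intervalIntegrable_const deriv_le
    _ = B * (c - a) := by rw [intervalIntegral.integral_const, smul_eq_mul, mul_comm]

lemma exp_neg_mul_le_of_ae_hasDerivAt_le {γ : ℝ → ℝ} {a c Λ B : ℝ} (ha : 0 ≤ a) (hac : a ≤ c)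
    (hΛ : 0 ≤ Λ) (hB : 0 ≤ B) (hγ : AbsolutelyContinuousOnInterval γ a c)
    (hd : ∀ᵐ t : ℝ, t ∈ Set.Ioo a c → ∃ γ', HasDerivAt γ γ' t ∧ γ' ≤ Λ * γ t + B) :
    Real.exp (-Λ * c) * γ c ≤ Real.exp (-Λ * a) * γ a + B * (c - a) := by
  have exp_ac : AbsolutelyContinuousOnInterval (fun t => Real.exp (-Λ * t)) a c := by
    have : ContDiffOn ℝ 1 (fun t => Real.exp (-Λ * t)) (Set.uIcc a c) := by fun_prop
    exact this.absolutelyContinuousOnInterval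
  suffices h : ∀ᵐ t : ℝ, t ∈ Set.Ioo a c →
      ∃ f', HasDerivAt (fun t => Real.exp (-Λ * t) * γ t) f' t ∧ f' ≤ B by
    linarith [sub_le_mul_sub_of_ae_hasDerivAt_le hac (exp_ac.fun_mul hγ) h]
  filter_upwards [hd] with t ht htI
  obtain ⟨γ', hγ', hle⟩ := ht htI
  have exp_deriv : HasDerivAt (fun t => Real.exp (-Λ * t)) (Real.exp (-Λ * t) * -Λ) t := by
    simpa using ((hasDerivAt_id t).const_mul (-Λ)).exp
  refine ⟨_, exp_deriv.mul hγ', ?_⟩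
  have exp_le_one : Real.exp (-Λ * t) ≤ 1 := by
    rw [Real.exp_le_one_iff, neg_mul, neg_nonpos]
    exact mul_nonneg hΛ (ha.trans htI.1.le)
  calc Real.exp (-Λ * t) * -Λ * γ t + Real.exp (-Λ * t) * γ'
      = Real.exp (-Λ * t) * (γ' - Λ * γ t) := by ring
    _ ≤ Real.exp (-Λ * t) * B := by gcongr; linarith
    _ ≤ B := mul_le_of_le_one_left hB exp_le_one

lemma exists_lipschitzOnWith_clm_apply {α : Type*} [PseudoMetricSpace α] {s : Set α}
    (hs : IsCompact s) {f : α → E →L[ℝ] W} {g : α → E} {Kf Kg : ℝ≥0}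
    (hf : LipschitzOnWith Kf f s) (hg : LipschitzOnWith Kg g s) :
    ∃ K, LipschitzOnWith K (fun t => f t (g t)) s := by
  obtain ⟨Mf, hMf⟩ := hs.exists_bound_of_continuousOn hf.continuousOn
  obtain ⟨Mg, hMg⟩ := hs.exists_bound_of_continuousOn hg.continuousOn
  refine ⟨_, LipschitzOnWith.of_dist_le' (K := Kf * Mg + Mf * Kg) fun x hx y hy => ?_⟩
  have hfxy := hf.dist_le_mul x hx y hy
  have hgxy := hg.dist_le_mul x hx y hy
  rw [dist_eq_norm] at hfxy hgxy ⊢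
  calc ‖f x (g x) - f y (g y)‖ = ‖(f x - f y) (g x) + f y (g x - g y)‖ := by
        rw [sub_apply, map_sub]; congr 1; abel
    _ ≤ Kf * dist x y * Mg + Mf * (Kg * dist x y) :=
      norm_add_le_of_le (ContinuousLinearMap.le_of_opNorm_le_of_le _ hfxy (hMg x hx))
        (ContinuousLinearMap.le_of_opNorm_le_of_le _ (hMf y hy) hgxy)
    _ = (Kf * Mg + Mf * Kg) * dist x y := by ring

lemma norm_image_affine_sub_le {f : E → W} {f' : E → E →L[ℝ] W} {φ : E →L[ℝ] W} {s : Set E}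
    {K θ : ℝ} {u x : E} (hs : Convex ℝ s) (hf : ∀ m ∈ s, HasFDerivWithinAt f (f' m) s m)
    (hK : ∀ m ∈ s, ‖f' m - φ‖ ≤ K) (hu : u ∈ s) (hx : x ∈ s) (hθ : θ ∈ Set.Icc (0 : ℝ) 1) :
    ‖f (u + θ • (x - u)) - (f u + θ • (f x - f u))‖ ≤ 2 * (K * ‖x - u‖) := by
  have remainder_le : ∀ m ∈ s, ‖f m - f u - φ (m - u)‖ ≤ K * ‖m - u‖ := fun m hm =>
    hs.norm_image_sub_le_of_norm_hasFDerivWithin_le' hf hK hu hm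
  have hm := remainder_le _ (hs.add_smul_sub_mem hu hx hθ)
  have hx := remainder_le x hx
  have hKx : 0 ≤ K * ‖x - u‖ := (norm_nonneg _).trans hx
  rw [add_sub_cancel_left, norm_smul, Real.norm_of_nonneg hθ.1, map_smul] at hm
  calc ‖f (u + θ • (x - u)) - (f u + θ • (f x - f u))‖
      = ‖(f (u + θ • (x - u)) - f u - θ • φ (x - u)) - θ • (f x - f u - φ (x - u))‖ := by
        congr 1; module
    _ ≤ K * (θ * ‖x - u‖) + θ * (K * ‖x - u‖) := by
        refine norm_sub_le_of_le hm ?_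
        rw [norm_smul, Real.norm_of_nonneg hθ.1]
        exact mul_le_mul_of_nonneg_left hx hθ.1
    _ ≤ 2 * (K * ‖x - u‖) := by nlinarith [hθ.2]

lemma norm_sub_sub_smul_deriv_le {f f' : ℝ → W} {a c ω : ℝ} (hac : a ≤ c)
    (hf : ∀ t ∈ Set.Icc a c, HasDerivAt f (f' t) t) {q : W}
    (hω : ∀ t ∈ Set.Icc a c, ‖f' t - q‖ ≤ ω) :
    ‖f c - f a - (c - a) • q‖ ≤ ω * (c - a) := by
  have h := (convex_Icc a c).norm_image_sub_le_of_norm_hasDerivWithin_le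
    (fun t ht => ((hf t ht).sub ((hasDerivAt_id t).smul_const q)).hasDerivWithinAt)
    (C := ω) (fun t ht => by simpa using hω t ht)
    (Set.left_mem_Icc.2 hac) (Set.right_mem_Icc.2 hac)
  rw [Real.norm_of_nonneg (sub_nonneg.2 hac)] at h
  convert h using 2
  simp only [Pi.sub_apply, id_eq]
  module

lemma norm_path_sub_affine_le {f f' : ℝ → W} {a t c ω : ℝ} (ht : t ∈ Set.Icc a c) (hac : a < c)
    (hf : ∀ t ∈ Set.Icc a c, HasDerivAt f (f' t) t)
    (hω : ∀ t ∈ Set.Icc a c, ‖f' t - f' a‖ ≤ ω) :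
    ‖f t - (f a + ((t - a) / (c - a)) • (f c - f a))‖ ≤ 2 * (ω * (c - a)) := by
  have hca := sub_pos.2 hac
  have h := norm_image_affine_sub_le (φ := ContinuousLinearMap.toSpanSingleton ℝ (f' a))
    (convex_Icc a c) (fun t ht => (hf t ht).hasFDerivAt.hasFDerivWithinAt) (K := ω)
    (fun t ht => ?_) (Set.left_mem_Icc.2 hac.le) (Set.right_mem_Icc.2 hac.le)
    (θ := (t - a) / (c - a)) ⟨div_nonneg (sub_nonneg.2 ht.1) hca.le,
      (div_le_one hca).2 (by linarith [ht.2])⟩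
  · rwa [smul_eq_mul, div_mul_cancel₀ _ hca.ne', add_sub_cancel, Real.norm_of_nonneg hca.le] at h
  · have toSpanSingleton_sub : ContinuousLinearMap.toSpanSingleton ℝ (f' t)
        - ContinuousLinearMap.toSpanSingleton ℝ (f' a)
        = ContinuousLinearMap.toSpanSingleton ℝ (f' t - f' a) := by ext; simp
    rw [toSpanSingleton_sub, ContinuousLinearMap.norm_toSpanSingleton]
    exact hω t ht

lemma norm_image_sub_sub_fderiv_le {f : E → W} {f' : E → E →L[ℝ] W} {s : Set E} {C : ℝ≥0}
    {x w : E} (hs : Convex ℝ s) (hf : ∀ m ∈ s, HasFDerivWithinAt f (f' m) s m)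
    (hf' : LipschitzOnWith C f' s) (hx : x ∈ s) (hw : w ∈ s) :
    ‖f x - f w - f' w (x - w)‖ ≤ C * ‖x - w‖ ^ 2 := by
  have hseg := hs.segment_subset hw hx
  have h := (convex_segment (𝕜 := ℝ) w x).norm_image_sub_le_of_norm_hasFDerivWithin_le'
    (φ := f' w) (C := C * ‖x - w‖) (fun m hm => (hf m (hseg hm)).mono hseg) (fun m hm => ?_)
    (left_mem_segment ℝ w x) (right_mem_segment ℝ w x)
  · rwa [mul_assoc, ← sq] at h
  · refine (hf'.norm_sub_le (hseg hm) hw).trans ?_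
    gcongr
    simpa only [dist_eq_norm, norm_sub_rev] using norm_sub_le_of_mem_segment hm

lemma norm_image_affine_sub_le_of_lipschitzOnWith {f : E → W} {f' : E → E →L[ℝ] W} {s : Set E}
    {C : ℝ≥0} {θ : ℝ} {u x : E} (hs : Convex ℝ s) (hf : ∀ m ∈ s, HasFDerivWithinAt f (f' m) s m)
    (hf' : LipschitzOnWith C f' s) (hu : u ∈ s) (hx : x ∈ s) (hθ : θ ∈ Set.Icc (0 : ℝ) 1) :
    ‖f (u + θ • (x - u)) - (f u + θ • (f x - f u))‖ ≤ 2 * (C * ‖x - u‖ ^ 2) := by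
  have hseg := hs.segment_subset hu hx
  have h := norm_image_affine_sub_le (φ := f' u) (K := C * ‖x - u‖) (convex_segment u x)
    (fun m hm => (hf m (hseg hm)).mono hseg) (fun m hm => ?_)
    (left_mem_segment ℝ u x) (right_mem_segment ℝ u x) hθ
  · rwa [mul_assoc, ← sq] at h
  · refine (hf'.norm_sub_le (hseg hm) hu).trans ?_
    gcongr
    simpa only [dist_eq_norm, norm_sub_rev] using norm_sub_le_of_mem_segment hm

lemma le_sub_apply_of_forall_segment {G : E → E →L[ℝ] ℝ} {H : E → E →L[ℝ] E →L[ℝ] ℝ} {c : ℝ}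
    {x w : E} (hG : ∀ m ∈ segment ℝ w x, HasFDerivAt G (H m) m)
    (hc : ∀ m ∈ segment ℝ w x, c ≤ H m (x - w) (x - w)) :
    c ≤ (G x - G w) (x - w) := by
  obtain ⟨m, hm, hmv⟩ := domain_mvt (f := fun m => G m (x - w))
    (f' := fun m => (ContinuousLinearMap.apply ℝ ℝ (x - w)).comp (H m))
    (fun m hm => ((ContinuousLinearMap.apply ℝ ℝ (x - w)).hasFDerivAt.comp m
      (hG m hm)).hasFDerivWithinAt)
    (convex_segment w x) (left_mem_segment ℝ w x) (right_mem_segment ℝ w x)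
  have hmseg : m ∈ segment ℝ w x := hm
  calc c ≤ H m (x - w) (x - w) := hc m hmseg
    _ = (G x - G w) (x - w) := by rw [sub_apply]; exact hmv.symm

end Calculus

section RateIndependence

variable {E W : Type*} [NormedAddCommGroup E] [NormedSpace ℝ E]
  [NormedAddCommGroup W] [NormedSpace ℝ W]

/-- Sublinear functions, i.e. the convex positively 1-homogeneous dissipation potentials. -/
structure IsSublinear (ρ : E → ℝ) : Prop where
  add_le : ∀ v w, ρ (v + w) ≤ ρ v + ρ w
  smul_of_nonneg : ∀ (c : ℝ) (v : E), 0 ≤ c → ρ (c • v) = c * ρ v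

/-- The force balance `-σ ∈ ∂ρ(0)`: the driving force `-σ` does not exceed the yield threshold. -/
def IsStable (ρ : E → ℝ) (σ : E →L[ℝ] ℝ) : Prop :=
  ∀ w, 0 ≤ σ w + ρ w

/-- The flow rule `-σ ∈ ∂ρ(v)` of a positively 1-homogeneous potential `ρ`, written as stability
together with the power balance. -/
structure FlowRule (ρ : E → ℝ) (σ : E →L[ℝ] ℝ) (v : E) : Prop where
  stable : IsStable ρ σ
  power_balance : σ v + ρ v = 0

/-- `x` minimizes `J + ρ(· - u)` over the `τ`-ball around `u` for the seminorm `‖ι ·‖`. -/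
structure IncrementalMin (J : E → ℝ) (ι : E →L[ℝ] W) (ρ : E → ℝ) (τ : ℝ) (u x : E) : Prop where
  norm_le : ‖ι (x - u)‖ ≤ τ
  le_of_norm_le : ∀ w, ‖ι (w - u)‖ ≤ τ → J x + ρ (x - u) ≤ J w + ρ (w - u)

variable {ρ : E → ℝ} {ι : E →L[ℝ] W}

lemma IsSublinear.of_convexOn (hconv : ConvexOn ℝ Set.univ ρ)
    (hhom : ∀ (c : ℝ) (v : E), 0 ≤ c → ρ (c • v) = c * ρ v) : IsSublinear ρ where
  add_le v w := by
    have h := hconv.2 (Set.mem_univ ((2 : ℝ) • v)) (Set.mem_univ ((2 : ℝ) • w))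
      (by norm_num : (0 : ℝ) ≤ 1 / 2) (by norm_num : (0 : ℝ) ≤ 1 / 2) (by norm_num)
    simpa [hhom, smul_smul] using h
  smul_of_nonneg := hhom

lemma IsSublinear.comp {R : W → ℝ} (hR : IsSublinear R) (ι : E →L[ℝ] W) :
    IsSublinear fun v => R (ι v) where
  add_le v w := by simpa only [map_add] using hR.add_le (ι v) (ι w)
  smul_of_nonneg c v hc := by simpa only [map_smul] using hR.smul_of_nonneg c (ι v) hc

lemma IsSublinear.map_zero (hρ : IsSublinear ρ) : ρ 0 = 0 := by
  simpa using hρ.smul_of_nonneg 0 0 le_rfl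

lemma IsSublinear.convexOn_sub (hρ : IsSublinear ρ) {S : Set E} (hS : Convex ℝ S) (u : E) :
    ConvexOn ℝ S fun w => ρ (w - u) := by
  refine ⟨hS, fun v _ w _ p q hp hq hpq => ?_⟩
  obtain rfl : q = 1 - p := eq_sub_of_add_eq' hpq
  have hvw : p • v + (1 - p) • w - u = p • (v - u) + (1 - p) • (w - u) := by module
  beta_reduce
  rw [hvw, smul_eq_mul, smul_eq_mul, ← hρ.smul_of_nonneg p _ hp, ← hρ.smul_of_nonneg (1 - p) _ hq]
  exact hρ.add_le _ _

lemma FlowRule.smul {σ : E →L[ℝ] ℝ} {v : E} {c : ℝ} (hρ : IsSublinear ρ) (hc : 0 ≤ c)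
    (h : FlowRule ρ σ v) : FlowRule ρ σ (c • v) where
  stable := h.stable
  power_balance := by
    rw [map_smul, smul_eq_mul, hρ.smul_of_nonneg c v hc, ← mul_add, h.power_balance, mul_zero]

-- Convexity of the stable set makes `σ₀ + θ • (σ₁ - σ₀)` stable, so an approximation `σ` of it
-- satisfies the flow rules of `v` and `v'` up to the defect at `σ₀` and the approximation error.
lemma FlowRule.sub_apply_sub_le {σ₀ σ₁ σ σ' : E →L[ℝ] ℝ} {v v' : E} {θ ε : ℝ}
    (h₀ : IsStable ρ σ₀) (h₁ : FlowRule ρ σ₁ v) (h' : FlowRule ρ σ' v')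
    (hθ : θ ∈ Set.Icc (0 : ℝ) 1) (hε : ‖σ - (σ₀ + θ • (σ₁ - σ₀))‖ ≤ ε) :
    (σ - σ') (v - v') ≤ (σ₀ v + ρ v) + ε * (‖v‖ + ‖v'‖) := by
  have error_le : (σ - (σ₀ + θ • (σ₁ - σ₀))) (v - v') ≤ ε * (‖v‖ + ‖v'‖) :=
    apply_le_mul_of_norm_le hε (norm_sub_le v v')
  have defect_nonneg := mul_nonneg hθ.1 (h₀ v)
  have stable_left := mul_nonneg (sub_nonneg.2 hθ.2) (h₀ v')
  have stable_right := mul_nonneg hθ.1 (h₁.stable v')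
  have balance_mul : θ * (σ₁ v + ρ v) = 0 := by rw [h₁.power_balance, mul_zero]
  have stable' := h'.stable v
  have balance' := h'.power_balance
  simp only [sub_apply, add_apply, smul_apply, smul_eq_mul, map_sub] at error_le ⊢
  linarith

lemma nonneg_apply_sub_add_sub_of_isMinOn {J g : E → ℝ} {D : E →L[ℝ] ℝ} {S : Set E} {x w : E}
    (hJ : HasFDerivAt J D x) (hg : ConvexOn ℝ S g) (hmin : IsMinOn (fun w => J w + g w) S x)
    (hx : x ∈ S) (hw : w ∈ S) :
    0 ≤ D (w - x) + (g w - g x) := by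
  have slope_tendsto := (hJ.hasLineDerivAt (w - x)).tendsto_slope_zero_right
  suffices h : -(g w - g x) ≤ D (w - x) by linarith
  refine ge_of_tendsto slope_tendsto ?_
  filter_upwards [Ioo_mem_nhdsGT one_pos] with θ hθ
  have hθx : x + θ • (w - x) = (1 - θ) • x + θ • w := by module
  have hmem := hg.1.add_smul_sub_mem hx hw ⟨hθ.1.le, hθ.2.le⟩
  have hle := hg.2 hx hw (sub_nonneg.2 hθ.2.le) hθ.1.le (by ring)
  have hJg := isMinOn_iff.1 hmin _ hmem
  rw [← hθx] at hle
  rw [smul_eq_mul, le_inv_mul_iff₀ hθ.1]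
  simp only [smul_eq_mul] at hle
  linarith

namespace IncrementalMin

variable {J : E → ℝ} {D : E →L[ℝ] ℝ} {τ : ℝ} {u x : E}

lemma variational_inequality (h : IncrementalMin J ι ρ τ u x) (hρ : IsSublinear ρ)
    (hJ : HasFDerivAt J D x) {w : E} (hw : ‖ι (w - u)‖ ≤ τ) :
    0 ≤ D (w - x) + (ρ (w - u) - ρ (x - u)) := by
  have ball_convex : Convex ℝ {w | ‖ι (w - u)‖ ≤ τ} := by
    have : {w | ‖ι (w - u)‖ ≤ τ} = ι ⁻¹' Metric.closedBall (ι u) τ := by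
      ext w; simp [dist_eq_norm]
    rw [this]
    exact (convex_closedBall _ _).is_linear_preimage ι.toLinearMap.isLinear
  exact nonneg_apply_sub_add_sub_of_isMinOn hJ (hρ.convexOn_sub ball_convex u)
    (isMinOn_iff.2 h.le_of_norm_le) h.norm_le hw

lemma apply_sub_add_nonpos (h : IncrementalMin J ι ρ τ u x) (hρ : IsSublinear ρ)
    (hJ : HasFDerivAt J D x) : D (x - u) + ρ (x - u) ≤ 0 := by
  have hu := h.variational_inequality hρ hJ (w := u)
    (by simpa using (norm_nonneg _).trans h.norm_le)
  rw [sub_self, hρ.map_zero, ← neg_sub x u, map_neg] at hu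
  linarith

lemma flowRule (h : IncrementalMin J ι ρ τ u x) (hρ : IsSublinear ρ) (hJ : HasFDerivAt J D x)
    (hlt : ‖ι (x - u)‖ < τ) : FlowRule ρ D (x - u) := by
  have stable : IsStable ρ D := fun w => by
    have near : ∀ᶠ θ : ℝ in nhdsWithin 0 (Set.Ioi 0), ‖ι (x + θ • w - u)‖ < τ := by
      have : Continuous fun θ : ℝ => ‖ι (x + θ • w - u)‖ := by fun_prop
      exact (this.tendsto' 0 _ (by simp)).eventually_lt_const hlt |>.filter_mono
        nhdsWithin_le_nhds
    obtain ⟨θ, hθw, hθ⟩ := (near.and self_mem_nhdsWithin).exists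
    have hvi := h.variational_inequality hρ hJ hθw.le
    have hsub : ρ (x + θ • w - u) ≤ ρ (x - u) + θ * ρ w := by
      rw [← hρ.smul_of_nonneg θ w (le_of_lt hθ), add_sub_right_comm]
      exact hρ.add_le _ _
    rw [add_sub_cancel_left, map_smul, smul_eq_mul] at hvi
    exact nonneg_of_mul_nonneg_right (by linarith : 0 ≤ θ * (D w + ρ w)) hθ
  exact ⟨stable, (h.apply_sub_add_nonpos hρ hJ).antisymm (stable _)⟩

-- The force increment between two stable states is carried by the change of the load alone.
lemma mul_norm_sub_le {σ₀ η₀ η₁ : E →L[ℝ] ℝ} {κ : ℝ} (h : IncrementalMin J ι ρ τ u x)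
    (hρ : IsSublinear ρ) (hJ : HasFDerivAt J (D - η₁) x) (hu : IsStable ρ (σ₀ - η₀))
    (hmono : κ * ‖x - u‖ ^ 2 ≤ (D - σ₀) (x - u)) :
    κ * ‖x - u‖ ≤ ‖η₁ - η₀‖ := by
  have hx := h.apply_sub_add_nonpos hρ hJ
  have hux := hu (x - u)
  have load_le : (η₁ - η₀) (x - u) ≤ ‖η₁ - η₀‖ * ‖x - u‖ :=
    apply_le_mul_of_norm_le le_rfl le_rfl
  simp only [sub_apply] at hmono hx hux load_le
  rcases (norm_nonneg (x - u)).eq_or_lt with h0 | hpos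
  · rw [← h0, mul_zero]; exact norm_nonneg _
  · exact le_of_mul_le_mul_right (by linarith [sq ‖x - u‖]) hpos

end IncrementalMin

end RateIndependence

section Evolution

variable {E : Type*} [NormedAddCommGroup E] [NormedSpace ℝ E]

variable (E) in
/-- A rate-independent evolution `-(G (y t) - b t) ∈ ∂ρ(y' t)` on `[0, T]` along an `L`-Lipschitz
path `y`. The force `G` has a symmetric derivative `H`, which is `C`-Lipschitz on the bounded convex
set `s` and `κ`-coercive on the tube of radius `Δ` around `y`; the load `b` has a derivative `b'` of
bounded variation. -/
structure UniformlyConvexEvolution where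
  (G : E → E →L[ℝ] ℝ) (H : E → E →L[ℝ] E →L[ℝ] ℝ) (b b' : ℝ → E →L[ℝ] ℝ) (ρ : E → ℝ) (y : ℝ → E)
  (s : Set E) (T κ Δ : ℝ) (C L : ℝ≥0)
  T_pos : 0 < T
  κ_pos : 0 < κ
  Δ_pos : 0 < Δ
  sublinear : IsSublinear ρ
  hasFDerivAt_force : ∀ x, HasFDerivAt G (H x) x
  symm : ∀ x v w, H x v w = H x w v
  convex : Convex ℝ s
  isBounded : Bornology.IsBounded s
  lipschitz_stiffness : LipschitzOnWith C H s
  hasDerivAt_load : ∀ t ∈ Set.Icc 0 T, HasDerivAt b (b' t) t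
  boundedVariation : BoundedVariationOn b' (Set.Icc 0 T)
  lipschitz_path : LipschitzOnWith L y (Set.Icc 0 T)
  tube_subset : ∀ t ∈ Set.Icc 0 T, Metric.closedBall (y t) Δ ⊆ s
  coercive : ∀ t ∈ Set.Icc 0 T, ∀ x ∈ Metric.closedBall (y t) Δ, ∀ v, κ * ‖v‖ ^ 2 ≤ H x v v
  flow : ∀ᵐ t : ℝ, t ∈ Set.Ioo 0 T → ∃ v, HasDerivAt y v t ∧ FlowRule ρ (G (y t) - b t) v

namespace UniformlyConvexEvolution

variable (e : UniformlyConvexEvolution E) {a c t : ℝ} {u v x w : E}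

/-- The variation of the load rate on `[0, t]`. -/
def loadVariation (t : ℝ) : ℝ :=
  variationOnFromTo e.b' (Set.Icc 0 e.T) 0 t

/-- The symmetrized Bregman distance of the energy with gradient `G`. -/
def symmBregman (x w : E) : ℝ :=
  (e.G x - e.G w) (x - w)

/-- The potential `v ↦ ⟨b' t, v⟩ - ½⟨H u v, v⟩` of the linearized rate problem, whose growth
controls the defect of a discrete step. -/
def ratePotential (t : ℝ) (u v : E) : ℝ :=
  e.b' t v - 1 / 2 * e.H u v v

/-- The Gronwall rate of the symmetrized Bregman distance. -/
def growthRate : ℝ :=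
  e.C * (1 + e.L) / e.κ

/-- The interpolation error of the residual force over a step on `[a, c]`. -/
def residualError (a c : ℝ) : ℝ :=
  2 * (e.C * (c - a) ^ 2) + 2 * ((e.loadVariation c - e.loadVariation a) * (c - a))

/-- A step inside the tube, with rate `v`, from the stable state `u` at time `a` to the state
`u + (c - a) • v`, which satisfies the flow rule at time `c`. -/
structure DiscreteStep (a c : ℝ) (u v : E) : Prop where
  nonneg : 0 ≤ a
  lt : a < c
  le_T : c ≤ e.T
  norm_rate_le : ‖v‖ ≤ 1
  stable_left : IsStable e.ρ (e.G u - e.b a)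
  flow_right : FlowRule e.ρ (e.G (u + (c - a) • v) - e.b c) v
  left_mem : ∀ t ∈ Set.Icc a c, u ∈ Metric.closedBall (e.y t) e.Δ
  right_mem : ∀ t ∈ Set.Icc a c, u + (c - a) • v ∈ Metric.closedBall (e.y t) e.Δ

lemma norm_loadRate_sub_le (ha : 0 ≤ a) (hcT : c ≤ e.T) {p q : ℝ} (hp : p ∈ Set.Icc a c)
    (hq : q ∈ Set.Icc a c) : ‖e.b' p - e.b' q‖ ≤ e.loadVariation c - e.loadVariation a := by
  have hac := hp.1.trans hp.2
  have hsub : Set.Icc a c ⊆ Set.Icc 0 e.T := Set.Icc_subset_Icc ha hcT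
  have hbv := e.boundedVariation.locallyBoundedVariationOn
  have haI := hsub (Set.left_mem_Icc.2 hac)
  have hcI := hsub (Set.right_mem_Icc.2 hac)
  rw [loadVariation, loadVariation,
    variationOnFromTo.sub_right hbv (Set.left_mem_Icc.2 e.T_pos.le) hcI haI,
    variationOnFromTo.eq_of_le _ _ hac, ← dist_eq_norm, dist_edist]
  exact ENNReal.toReal_mono (hbv a c haI hcI)
    (eVariationOn.edist_le _ ⟨hsub hp, hp⟩ ⟨hsub hq, hq⟩)

lemma loadVariation_le (ha : 0 ≤ a) (hac : a ≤ c) (hcT : c ≤ e.T) :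
    e.loadVariation a ≤ e.loadVariation c := by
  have h := e.norm_loadRate_sub_le ha hcT (Set.left_mem_Icc.2 hac) (Set.left_mem_Icc.2 hac)
  rwa [sub_self, norm_zero, sub_nonneg] at h

lemma loadVariation_zero : e.loadVariation 0 = 0 :=
  variationOnFromTo.self _ _ _

lemma loadVariation_nonneg (ht : t ∈ Set.Icc 0 e.T) : 0 ≤ e.loadVariation t :=
  e.loadVariation_zero.symm.trans_le (e.loadVariation_le le_rfl ht.1 ht.2)

lemma growthRate_nonneg : 0 ≤ e.growthRate :=
  div_nonneg (by positivity) e.κ_pos.le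

lemma residualError_nonneg (ha : 0 ≤ a) (hac : a ≤ c) (hcT : c ≤ e.T) :
    0 ≤ e.residualError a c := by
  have h := sub_nonneg.2 (e.loadVariation_le ha hac hcT)
  have := sub_nonneg.2 hac
  unfold residualError
  positivity

lemma path_mem_closedBall (t : ℝ) : e.y t ∈ Metric.closedBall (e.y t) e.Δ :=
  Metric.mem_closedBall_self e.Δ_pos.le

lemma path_mem (ht : t ∈ Set.Icc 0 e.T) : e.y t ∈ e.s :=
  e.tube_subset t ht (e.path_mem_closedBall t)

lemma mul_norm_sub_sq_le_symmBregman (ht : t ∈ Set.Icc 0 e.T)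
    (hx : x ∈ Metric.closedBall (e.y t) e.Δ) (hw : w ∈ Metric.closedBall (e.y t) e.Δ) :
    e.κ * ‖x - w‖ ^ 2 ≤ e.symmBregman x w :=
  le_sub_apply_of_forall_segment (fun m _ => e.hasFDerivAt_force m) fun m hm =>
    e.coercive t ht m ((convex_closedBall _ _).segment_subset hw hx hm) (x - w)

lemma force_remainder_le (hx : x ∈ e.s) (hw : w ∈ e.s) :
    ‖e.G x - e.G w - e.H w (x - w)‖ ≤ e.C * ‖x - w‖ ^ 2 :=
  norm_image_sub_sub_fderiv_le e.convex (fun m _ => (e.hasFDerivAt_force m).hasFDerivWithinAt)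
    e.lipschitz_stiffness hx hw

lemma stiffness_pairing_le {v' : E} (hx : x ∈ e.s) (hw : w ∈ e.s) :
    (e.H x v - e.H w v') (x - w) ≤
      (e.G x - e.G w) (v - v') + e.C * ‖x - w‖ ^ 2 * (‖v‖ + ‖v'‖) := by
  have hxw : (e.G w - e.G x - e.H x (w - x)) v ≤ e.C * ‖x - w‖ ^ 2 * ‖v‖ := by
    rw [norm_sub_rev x w]
    exact apply_le_mul_of_norm_le (e.force_remainder_le hw hx) le_rfl
  have hwx : (e.G x - e.G w - e.H w (x - w)) v' ≤ e.C * ‖x - w‖ ^ 2 * ‖v'‖ :=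
    apply_le_mul_of_norm_le (e.force_remainder_le hx hw) le_rfl
  rw [sub_apply, e.symm x v, e.symm w v']
  simp only [sub_apply, map_sub] at hxw hwx ⊢
  linarith

lemma hasDerivAt_symmBregman {p q : ℝ → E} {p' q' : E} (hp : HasDerivAt p p' t)
    (hq : HasDerivAt q q' t) :
    HasDerivAt (fun t => e.symmBregman (p t) (q t))
      ((e.H (p t) p' - e.H (q t) q') (p t - q t) + (e.G (p t) - e.G (q t)) (p' - q')) t :=
  (((e.hasFDerivAt_force (p t)).comp_hasDerivAt t hp).sub
    ((e.hasFDerivAt_force (q t)).comp_hasDerivAt t hq)).clm_apply (hp.sub hq)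

lemma exists_lipschitzOnWith_force : ∃ M, LipschitzOnWith M e.G e.s := by
  have h0 := e.path_mem (Set.left_mem_Icc.2 e.T_pos.le)
  refine ⟨(‖e.H (e.y 0)‖ + e.C * Metric.diam e.s).toNNReal,
    e.convex.lipschitzOnWith_of_nnnorm_hasFDerivWithin_le
      (fun x _ => (e.hasFDerivAt_force x).hasFDerivWithinAt) fun x hx => ?_⟩
  rw [← norm_toNNReal]
  refine Real.toNNReal_le_toNNReal ((norm_le_norm_add_norm_sub' (e.H x) (e.H (e.y 0))).trans ?_)
  gcongr
  exact (e.lipschitz_stiffness.dist_le_mul x hx _ h0 |>.trans' (dist_eq_norm _ _).ge).trans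
    (by gcongr; exact Metric.dist_le_diam_of_mem e.isBounded hx h0)

lemma symmBregman_absolutelyContinuousOnInterval {p q : ℝ → E} {Kp Kq : ℝ≥0}
    (hac : a ≤ c) (hp : LipschitzOnWith Kp p (Set.Icc a c))
    (hq : LipschitzOnWith Kq q (Set.Icc a c))
    (hps : Set.MapsTo p (Set.Icc a c) e.s) (hqs : Set.MapsTo q (Set.Icc a c) e.s) :
    AbsolutelyContinuousOnInterval (fun t => e.symmBregman (p t) (q t)) a c := by
  obtain ⟨M, hM⟩ := e.exists_lipschitzOnWith_force
  obtain ⟨K, hK⟩ := exists_lipschitzOnWith_clm_apply isCompact_Icc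
    ((hM.comp hp hps).sub (hM.comp hq hqs)) (hp.sub hq)
  rw [← Set.uIcc_of_le hac] at hK
  exact hK.absolutelyContinuousOnInterval

lemma isStable_path (ht : t ∈ Set.Icc 0 e.T) : IsStable e.ρ (e.G (e.y t) - e.b t) := by
  intro w
  have path_cont := e.lipschitz_path.continuousOn
  have force_cont : Continuous e.G :=
    continuous_iff_continuousAt.2 fun x => (e.hasFDerivAt_force x).continuousAt
  have load_cont : ContinuousOn e.b (Set.Icc 0 e.T) := fun t ht =>
    (e.hasDerivAt_load t ht).continuousAt.continuousWithinAt
  have ae_stable : (fun t => min ((e.G (e.y t) - e.b t) w + e.ρ w) 0)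
      =ᵐ[volume.restrict (Set.Icc 0 e.T)] fun _ => 0 := by
    rw [← restrict_Ioo_eq_restrict_Icc, Filter.EventuallyEq, ae_restrict_iff' measurableSet_Ioo]
    filter_upwards [e.flow] with t ht htI
    obtain ⟨v, -, hv⟩ := ht htI
    exact min_eq_right (hv.stable w)
  have h := Measure.eqOn_Icc_of_ae_eq volume e.T_pos.ne ae_stable (by fun_prop)
    continuousOn_const ht
  exact min_eq_right_iff.1 h

namespace DiscreteStep

variable {e}

lemma mem_Icc (h : e.DiscreteStep a c u v) (ht : t ∈ Set.Icc a c) : t ∈ Set.Icc 0 e.T :=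
  ⟨h.nonneg.trans ht.1, ht.2.trans h.le_T⟩

lemma fraction_mem (h : e.DiscreteStep a c u v) (ht : t ∈ Set.Icc a c) :
    (t - a) / (c - a) ∈ Set.Icc (0 : ℝ) 1 := by
  have hca := sub_pos.2 h.lt
  exact ⟨div_nonneg (sub_nonneg.2 ht.1) hca.le, (div_le_one hca).2 (by linarith [ht.2])⟩

lemma fraction_smul (h : e.DiscreteStep a c u v) (t : ℝ) :
    ((t - a) / (c - a)) • (u + (c - a) • v - u) = (t - a) • v := by
  rw [add_sub_cancel_left, smul_smul, div_mul_cancel₀ _ (sub_pos.2 h.lt).ne']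

lemma mem_closedBall (h : e.DiscreteStep a c u v) (ht : t ∈ Set.Icc a c) :
    u + (t - a) • v ∈ Metric.closedBall (e.y t) e.Δ := by
  rw [← h.fraction_smul t]
  exact (convex_closedBall _ _).add_smul_sub_mem (h.left_mem t ht) (h.right_mem t ht)
    (h.fraction_mem ht)

lemma left_mem_set (h : e.DiscreteStep a c u v) : u ∈ e.s :=
  e.tube_subset a (h.mem_Icc (Set.left_mem_Icc.2 h.lt.le))
    (h.left_mem a (Set.left_mem_Icc.2 h.lt.le))

lemma right_mem_set (h : e.DiscreteStep a c u v) : u + (c - a) • v ∈ e.s :=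
  e.tube_subset c (h.mem_Icc (Set.right_mem_Icc.2 h.lt.le))
    (h.right_mem c (Set.right_mem_Icc.2 h.lt.le))

lemma norm_sub_le (h : e.DiscreteStep a c u v) : ‖u - (u + (c - a) • v)‖ ≤ c - a := by
  have hca := (sub_pos.2 h.lt).le
  rw [sub_add_cancel_left, norm_neg, norm_smul, Real.norm_of_nonneg hca]
  exact mul_le_of_le_one_right hca h.norm_rate_le

lemma norm_residual_sub_affine_le (h : e.DiscreteStep a c u v) (ht : t ∈ Set.Icc a c) :
    ‖(e.G (u + (t - a) • v) - e.b t) - ((e.G u - e.b a) +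
        ((t - a) / (c - a)) • ((e.G (u + (c - a) • v) - e.b c) - (e.G u - e.b a)))‖ ≤
      e.residualError a c := by
  have force_le := norm_image_affine_sub_le_of_lipschitzOnWith e.convex
    (fun m _ => (e.hasFDerivAt_force m).hasFDerivWithinAt) e.lipschitz_stiffness
    h.left_mem_set h.right_mem_set (h.fraction_mem ht)
  have load_le := norm_path_sub_affine_le ht h.lt (fun t ht => e.hasDerivAt_load t (h.mem_Icc ht))
    fun t ht => e.norm_loadRate_sub_le h.nonneg h.le_T ht (Set.left_mem_Icc.2 h.lt.le)
  have step_sq_le : ‖u + (c - a) • v - u‖ ^ 2 ≤ (c - a) ^ 2 := by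
    rw [norm_sub_rev]
    exact pow_le_pow_left₀ (norm_nonneg _) h.norm_sub_le 2
  rw [h.fraction_smul t] at force_le
  refine le_trans (le_of_eq ?_) ((norm_sub_le_of_le force_le load_le).trans ?_)
  · congr 1; module
  · unfold residualError; gcongr

lemma derivative_symmBregman_le (h : e.DiscreteStep a c u v) {v' : E} (ht : t ∈ Set.Icc a c)
    (hv' : ‖v'‖ ≤ e.L) (hflow : FlowRule e.ρ (e.G (e.y t) - e.b t) v') :
    (e.H (u + (t - a) • v) v - e.H (e.y t) v') (u + (t - a) • v - e.y t) +
        (e.G (u + (t - a) • v) - e.G (e.y t)) (v - v') ≤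
      e.growthRate * e.symmBregman (u + (t - a) • v) (e.y t) +
        2 * ((e.G u - e.b a) v + e.ρ v + e.residualError a c * (1 + e.L)) := by
  have hp := h.mem_closedBall ht
  have hy := e.path_mem_closedBall t
  have htT := h.mem_Icc ht
  have rates_le : ‖v‖ + ‖v'‖ ≤ 1 + e.L := add_le_add h.norm_rate_le hv'
  have residual_nonneg := e.residualError_nonneg h.nonneg h.lt.le h.le_T
  have pairing_le := e.stiffness_pairing_le (v := v) (v' := v') (e.tube_subset t htT hp)
    (e.path_mem htT)
  have flow_le := FlowRule.sub_apply_sub_le h.stable_left h.flow_right hflow (h.fraction_mem ht)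
    (h.norm_residual_sub_affine_le ht)
  rw [sub_sub_sub_cancel_right] at flow_le
  have residual_le := mul_le_mul_of_nonneg_left rates_le residual_nonneg
  have quadratic_le : e.C * ‖u + (t - a) • v - e.y t‖ ^ 2 * (‖v‖ + ‖v'‖) ≤
      e.growthRate * e.symmBregman (u + (t - a) • v) (e.y t) := by
    calc e.C * ‖u + (t - a) • v - e.y t‖ ^ 2 * (‖v‖ + ‖v'‖)
        ≤ e.C * ‖u + (t - a) • v - e.y t‖ ^ 2 * (1 + e.L) := by gcongr
      _ = e.growthRate * (e.κ * ‖u + (t - a) • v - e.y t‖ ^ 2) := by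
          rw [growthRate]; field_simp [e.κ_pos.ne']
      _ ≤ _ := mul_le_mul_of_nonneg_left (e.mul_norm_sub_sq_le_symmBregman htT hp hy)
          e.growthRate_nonneg
  linarith

lemma exp_mul_symmBregman_le (h : e.DiscreteStep a c u v) :
    Real.exp (-e.growthRate * c) * e.symmBregman (u + (c - a) • v) (e.y c) ≤
      Real.exp (-e.growthRate * a) * e.symmBregman u (e.y a) +
        2 * ((e.G u - e.b a) v + e.ρ v + e.residualError a c * (1 + e.L)) * (c - a) := by
  have step_deriv : ∀ t, HasDerivAt (fun t => u + (t - a) • v) v t := fun t => by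
    simpa using (((hasDerivAt_id t).sub_const a).smul_const v).const_add u
  have step_lipschitz : LipschitzOnWith 1 (fun t => u + (t - a) • v) (Set.Icc a c) :=
    (convex_Icc a c).lipschitzOnWith_of_nnnorm_hasDerivWithin_le
      (fun t _ => (step_deriv t).hasDerivWithinAt) fun _ _ => h.norm_rate_le
  have path_lipschitz := e.lipschitz_path.mono fun t ht => h.mem_Icc ht
  have abs_cont := e.symmBregman_absolutelyContinuousOnInterval h.lt.le step_lipschitz
    path_lipschitz (fun t ht => e.tube_subset t (h.mem_Icc ht) (h.mem_closedBall ht))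
    fun t ht => e.path_mem (h.mem_Icc ht)
  have source_nonneg :
      0 ≤ 2 * ((e.G u - e.b a) v + e.ρ v + e.residualError a c * (1 + e.L)) := by
    have := h.stable_left v
    have := e.residualError_nonneg h.nonneg h.lt.le h.le_T
    positivity
  have gronwall := exp_neg_mul_le_of_ae_hasDerivAt_le h.nonneg h.lt.le e.growthRate_nonneg
    source_nonneg abs_cont ?_
  · simpa using gronwall
  filter_upwards [e.flow] with t ht htI
  have htI' := Set.Ioo_subset_Icc_self htI
  have htT : t ∈ Set.Ioo 0 e.T := ⟨h.nonneg.trans_lt htI.1, htI.2.trans_le h.le_T⟩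
  obtain ⟨v', hv', hflow⟩ := ht htT
  have norm_rate_le := hv'.le_of_lipschitzOn (Icc_mem_nhds htT.1 htT.2) e.lipschitz_path
  exact ⟨_, e.hasDerivAt_symmBregman (step_deriv t) hv',
    h.derivative_symmBregman_le htI' norm_rate_le hflow⟩

end DiscreteStep

lemma apply_le_ratePotential_sub (hH : 0 ≤ e.H x (v - w) (v - w)) :
    (e.b' t - e.H x v) (v - w) ≤ e.ratePotential t x v - e.ratePotential t x w := by
  have symm := e.symm x v w
  simp only [ratePotential, sub_apply, map_sub] at hH ⊢
  linarith

namespace DiscreteStep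

variable {e} {v₀ : E}

lemma ratePotential_left_le (h : e.DiscreteStep a c u v) (hv₀ : ‖v₀‖ ≤ 1) :
    e.ratePotential a u v₀ ≤ e.ratePotential c (u + (c - a) • v) v₀ +
      (e.C * (c - a) + (e.loadVariation c - e.loadVariation a)) := by
  have load_le := e.norm_loadRate_sub_le h.nonneg h.le_T (Set.left_mem_Icc.2 h.lt.le)
    (Set.right_mem_Icc.2 h.lt.le)
  have stiffness_le : ‖e.H (u + (c - a) • v) - e.H u‖ ≤ e.C * (c - a) := by
    refine (e.lipschitz_stiffness.norm_sub_le h.right_mem_set h.left_mem_set).trans ?_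
    rw [norm_sub_rev]
    exact mul_le_mul_of_nonneg_left h.norm_sub_le e.C.coe_nonneg
  have load_apply_le := apply_le_mul_of_norm_le load_le hv₀
  have stiffness_apply_le := apply_le_mul_of_norm_le
    (ContinuousLinearMap.le_of_opNorm_le_of_le _ stiffness_le hv₀) hv₀
  have := mul_nonneg e.C.coe_nonneg (sub_pos.2 h.lt).le
  simp only [ratePotential, sub_apply] at load_apply_le stiffness_apply_le ⊢
  linarith

lemma norm_force_remainder_le (h : e.DiscreteStep a c u v) :
    ‖(e.G u - e.b a) - (e.G (u + (c - a) • v) - e.b c) -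
        (c - a) • (e.b' c - e.H (u + (c - a) • v) v)‖ ≤
      (e.C * (c - a) + (e.loadVariation c - e.loadVariation a)) * (c - a) := by
  have force_le := (e.force_remainder_le h.left_mem_set h.right_mem_set).trans
    (mul_le_mul_of_nonneg_left (pow_le_pow_left₀ (norm_nonneg _) h.norm_sub_le 2) e.C.coe_nonneg)
  have load_le := norm_sub_sub_smul_deriv_le h.lt.le
    (fun t ht => e.hasDerivAt_load t (h.mem_Icc ht))
    fun t ht => e.norm_loadRate_sub_le h.nonneg h.le_T ht (Set.right_mem_Icc.2 h.lt.le)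
  refine le_trans (le_of_eq ?_) ((norm_add_le_of_le force_le load_le).trans (le_of_eq (by ring)))
  rw [sub_add_cancel_left, map_neg, map_smul]
  congr 1
  module

-- Testing the stability of the new state with the previous rate `v₀` bounds the defect by an
-- increment of the rate potential, which telescopes along the scheme.
lemma defect_le (h : e.DiscreteStep a c u v) (hv₀ : ‖v₀‖ ≤ 1)
    (hflow : FlowRule e.ρ (e.G u - e.b a) v₀) :
    (e.G u - e.b a) v + e.ρ v ≤ (c - a) *
      (e.ratePotential c (u + (c - a) • v) v - e.ratePotential a u v₀ +
        3 * (e.C * (c - a) + (e.loadVariation c - e.loadVariation a))) := by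
  have hca := sub_pos.2 h.lt
  have hcI := Set.right_mem_Icc.2 h.lt.le
  have stable_right := h.flow_right.stable v₀
  have balance_right := h.flow_right.power_balance
  have balance_left := hflow.power_balance
  have remainder_le := apply_le_mul_of_norm_le h.norm_force_remainder_le
    (norm_sub_le_of_le h.norm_rate_le hv₀)
  have potential_le := mul_le_mul_of_nonneg_left (e.apply_le_ratePotential_sub (t := c) (v := v)
    (w := v₀) (x := u + (c - a) • v) ((mul_nonneg e.κ_pos.le (sq_nonneg _)).trans
      (e.coercive c (h.mem_Icc hcI) _ (h.right_mem c hcI) _))) hca.le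
  have drift_le := mul_le_mul_of_nonneg_left (h.ratePotential_left_le hv₀) hca.le
  simp only [sub_apply, smul_apply, smul_eq_mul, map_sub] at *
  linarith

end DiscreteStep

/-- The constant in the consistency error of the scheme. -/
def consistencyConstant : ℝ :=
  (10 + 4 * e.L) * (e.C + 1)

/-- The error bound propagated by the scheme with step size `τ` for the state `u` at time `a`, which
satisfies the flow rule with some rate `v` of norm at most `1`. -/
def ErrorBudget (τ a : ℝ) (u : E) : Prop :=
  ∃ v, ‖v‖ ≤ 1 ∧ FlowRule e.ρ (e.G u - e.b a) v ∧
    Real.exp (-e.growthRate * a) * e.symmBregman u (e.y a) ≤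
      τ ^ 2 * (2 * e.ratePotential a u v + e.consistencyConstant * (a + e.loadVariation a))

/-- The constant of the error estimate derived from `ErrorBudget`. -/
def errorConstant : ℝ :=
  √(Real.exp (e.growthRate * e.T) * (2 * (‖e.b' 0‖ + e.loadVariation e.T) +
    e.consistencyConstant * (e.T + e.loadVariation e.T)) / e.κ)

lemma consistencyConstant_nonneg : 0 ≤ e.consistencyConstant := by
  unfold consistencyConstant; positivity

lemma ratePotential_le (ha : a ∈ Set.Icc 0 e.T) (hu : u ∈ Metric.closedBall (e.y a) e.Δ)
    (hv : ‖v‖ ≤ 1) : e.ratePotential a u v ≤ ‖e.b' 0‖ + e.loadVariation e.T := by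
  have rate_sub_le := e.norm_loadRate_sub_le le_rfl le_rfl ha (Set.left_mem_Icc.2 e.T_pos.le)
  rw [loadVariation_zero, sub_zero] at rate_sub_le
  have rate_le : ‖e.b' a‖ ≤ ‖e.b' 0‖ + e.loadVariation e.T :=
    (norm_le_norm_add_norm_sub' _ _).trans (by gcongr)
  have load_le := apply_le_mul_of_norm_le rate_le hv
  have stiffness_nonneg := (mul_nonneg e.κ_pos.le (sq_nonneg ‖v‖)).trans (e.coercive a ha u hu v)
  rw [ratePotential]
  linarith

lemma errorBudget_initial (τ : ℝ) : e.ErrorBudget τ 0 (e.y 0) := by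
  refine ⟨0, by simp, ⟨e.isStable_path (Set.left_mem_Icc.2 e.T_pos.le), ?_⟩, ?_⟩
  · rw [map_zero, e.sublinear.map_zero, add_zero]
  · simp [symmBregman, ratePotential, loadVariation_zero]

lemma DiscreteStep.of_flowRule (ha : 0 ≤ a) (hac : a < c) (hcT : c ≤ e.T)
    (hu : IsStable e.ρ (e.G u - e.b a)) (hx : FlowRule e.ρ (e.G x - e.b c) (x - u))
    (hxu : ‖x - u‖ ≤ c - a) (hleft : ∀ t ∈ Set.Icc a c, u ∈ Metric.closedBall (e.y t) e.Δ)
    (hright : ∀ t ∈ Set.Icc a c, x ∈ Metric.closedBall (e.y t) e.Δ) :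
    e.DiscreteStep a c u ((c - a)⁻¹ • (x - u)) := by
  have hca := sub_pos.2 hac
  have endpoint : u + (c - a) • (c - a)⁻¹ • (x - u) = x := by
    rw [smul_inv_smul₀ hca.ne', add_sub_cancel]
  refine ⟨ha, hac, hcT, ?_, hu, ?_, hleft, by rwa [endpoint]⟩
  · rw [norm_smul, norm_inv, Real.norm_of_nonneg hca.le]
    exact inv_mul_le_one_of_le₀ hxu hca.le
  · rw [endpoint]
    exact hx.smul e.sublinear (inv_nonneg.2 hca.le)

variable {e}

lemma ErrorBudget.step {τ : ℝ} (hE : e.ErrorBudget τ a u) (h : e.DiscreteStep a c u v)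
    (hτ : c - a ≤ τ) : e.ErrorBudget τ c (u + (c - a) • v) := by
  obtain ⟨v₀, hv₀, hflow, hle⟩ := hE
  refine ⟨v, h.norm_rate_le, h.flow_right, ?_⟩
  have hca := sub_pos.2 h.lt
  have hsq : (c - a) ^ 2 ≤ τ ^ 2 := pow_le_pow_left₀ hca.le hτ 2
  have defect_le := h.defect_le hv₀ hflow
  have defect_nonneg := (h.stable_left v).trans defect_le
  set ω := e.loadVariation c - e.loadVariation a
  set P := e.ratePotential c (u + (c - a) • v) v - e.ratePotential a u v₀
  have hω : 0 ≤ ω := sub_nonneg.2 (e.loadVariation_le h.nonneg h.lt.le h.le_T)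
  have increment_le : 2 * ((e.G u - e.b a) v + e.ρ v + e.residualError a c * (1 + e.L)) * (c - a) ≤
      τ ^ 2 * (2 * P + e.consistencyConstant * (c - a + ω)) := by
    have bracket_nonneg : 0 ≤ P + 3 * (e.C * (c - a) + ω) :=
      nonneg_of_mul_nonneg_right defect_nonneg hca
    calc _ ≤ 2 * ((c - a) * (P + 3 * (e.C * (c - a) + ω)) + e.residualError a c * (1 + e.L)) *
            (c - a) := by gcongr
      _ = (c - a) ^ 2 * (2 * (P + 3 * (e.C * (c - a) + ω)) +
            4 * (1 + e.L) * (e.C * (c - a) + ω)) := by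
          rw [residualError]; ring
      _ ≤ τ ^ 2 * (2 * (P + 3 * (e.C * (c - a) + ω)) + 4 * (1 + e.L) * (e.C * (c - a) + ω)) := by
          gcongr
      _ ≤ _ := by
          refine mul_le_mul_of_nonneg_left ?_ (sq_nonneg τ)
          have : (10 + 4 * e.L) * (e.C * (c - a) + ω) ≤ e.consistencyConstant * (c - a + ω) := by
            rw [consistencyConstant, mul_assoc]
            gcongr
            nlinarith [mul_nonneg e.C.coe_nonneg hω]
          linarith
  calc _ ≤ _ := h.exp_mul_symmBregman_le
    _ ≤ _ := add_le_add hle increment_le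
    _ = _ := by ring

lemma ErrorBudget.norm_sub_le {τ : ℝ} (hE : e.ErrorBudget τ a u) (hτ : 0 ≤ τ)
    (ha : a ∈ Set.Icc 0 e.T) (hu : u ∈ Metric.closedBall (e.y a) e.Δ) :
    ‖u - e.y a‖ ≤ e.errorConstant * τ := by
  obtain ⟨v, hv, -, hle⟩ := hE
  have potential_le := e.ratePotential_le ha hu hv
  have variation_le := e.loadVariation_le ha.1 ha.2 le_rfl
  have variation_nonneg := e.loadVariation_nonneg ha
  have hΛ := e.growthRate_nonneg
  have hM := e.consistencyConstant_nonneg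
  have hT := e.T_pos.le
  set S := 2 * (‖e.b' 0‖ + e.loadVariation e.T) +
    e.consistencyConstant * (e.T + e.loadVariation e.T) with hS
  have budget_le : Real.exp (-e.growthRate * a) * e.symmBregman u (e.y a) ≤ τ ^ 2 * S :=
    hle.trans (by rw [hS]; gcongr; exact ha.2)
  have budget_nonneg : 0 ≤ τ ^ 2 * S := by
    rw [hS]
    have := variation_nonneg.trans variation_le
    positivity
  refine (Real.le_sqrt_of_sq_le (y := Real.exp (e.growthRate * e.T) * S / e.κ * τ ^ 2) ?_).trans_eq
    (by rw [Real.sqrt_mul' _ (sq_nonneg τ), Real.sqrt_sq hτ]; rfl)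
  rw [div_mul_eq_mul_div, le_div_iff₀' e.κ_pos]
  calc e.κ * ‖u - e.y a‖ ^ 2 ≤ e.symmBregman u (e.y a) :=
        e.mul_norm_sub_sq_le_symmBregman ha hu (e.path_mem_closedBall a)
    _ = Real.exp (e.growthRate * a) *
        (Real.exp (-e.growthRate * a) * e.symmBregman u (e.y a)) := by
      rw [← mul_assoc, ← Real.exp_add, neg_mul, add_neg_cancel, Real.exp_zero, one_mul]
    _ ≤ Real.exp (e.growthRate * a) * (τ ^ 2 * S) := by gcongr
    _ ≤ Real.exp (e.growthRate * e.T) * (τ ^ 2 * S) := by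
      gcongr
      exact ha.2
    _ = Real.exp (e.growthRate * e.T) * S * τ ^ 2 := by ring

end UniformlyConvexEvolution

/-- The local incremental minimization scheme of step size `τ` for the energies `J`, started on the
path of `e`. -/
structure LocalScheme {W : Type*} [NormedAddCommGroup W] [NormedSpace ℝ W]
    (e : UniformlyConvexEvolution E) (J : ℝ → E → ℝ) (ι : E →L[ℝ] W) (τ : ℝ) (t : ℕ → ℝ)
    (z : ℕ → E) : Prop where
  time_zero : t 0 = 0
  state_zero : z 0 = e.y 0
  incrementalMin : ∀ k, IncrementalMin (J (t k)) ι e.ρ τ (z k) (z (k + 1))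
  time_succ : ∀ k, t (k + 1) = min (t k + τ - ‖ι (z (k + 1) - z k)‖) e.T

/-- Step sizes `τ` so small that the scheme for the energies `J` cannot leave the tube of `e`. -/
structure AdmissibleStepSize {W : Type*} [NormedAddCommGroup W] [NormedSpace ℝ W]
    (e : UniformlyConvexEvolution E) (J : ℝ → E → ℝ) (ι : E →L[ℝ] W) (τ : ℝ) : Prop where
  pos : 0 < τ
  path_le : e.L * τ ≤ e.Δ / 4
  error_le : e.errorConstant * τ ≤ e.Δ / 2
  step_le : ∀ a ∈ Set.Icc 0 e.T, ∀ c ∈ Set.Icc 0 e.T, ∀ u ∈ e.s, ∀ x,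
    IsStable e.ρ (e.G u - e.b a) → IncrementalMin (J c) ι e.ρ τ u x → ‖x - u‖ ≤ e.Δ / 4

section Scheme

variable {W : Type*} [NormedAddCommGroup W] [NormedSpace ℝ W] {e : UniformlyConvexEvolution E}
  {J : ℝ → E → ℝ} {ι : E →L[ℝ] W} {K₀ : ℝ≥0} {τ : ℝ} {t : ℕ → ℝ} {z : ℕ → E}

lemma AdmissibleStepSize.eventually
    (hstep : ∀ᶠ τ in nhdsWithin 0 (Set.Ioi 0), ∀ a ∈ Set.Icc 0 e.T, ∀ c ∈ Set.Icc 0 e.T,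
      ∀ u ∈ e.s, ∀ x, IsStable e.ρ (e.G u - e.b a) → IncrementalMin (J c) ι e.ρ τ u x →
        ‖x - u‖ ≤ e.Δ / 4) :
    ∀ᶠ τ in nhdsWithin 0 (Set.Ioi 0), AdmissibleStepSize e J ι τ := by
  have mul_eventually_le (c : ℝ) {ε : ℝ} (hε : 0 < ε) :
      ∀ᶠ τ in nhdsWithin 0 (Set.Ioi 0), c * τ ≤ ε :=
    (((continuous_const_mul c).tendsto' 0 0 (mul_zero c)).mono_left
      nhdsWithin_le_nhds).eventually_le_const hε
  filter_upwards [hstep, self_mem_nhdsWithin, mul_eventually_le e.L (div_pos e.Δ_pos four_pos),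
    mul_eventually_le e.errorConstant (half_pos e.Δ_pos)] with τ step_le pos path_le error_le
  exact ⟨pos, path_le, error_le, step_le⟩

namespace UniformlyConvexEvolution

lemma norm_sub_path_le {a s : ℝ} {u : E} {M : ℝ} (ha : a ∈ Set.Icc 0 e.T)
    (hs : s ∈ Set.Icc 0 e.T) (has : |a - s| ≤ τ) (hu : ‖u - e.y a‖ ≤ M) :
    ‖u - e.y s‖ ≤ M + e.L * τ := by
  refine (norm_sub_le_norm_sub_add_norm_sub u (e.y a) (e.y s)).trans (add_le_add hu ?_)
  refine (e.lipschitz_path.norm_sub_le ha hs).trans ?_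
  gcongr
  exact has

lemma mul_norm_sub_le_of_incrementalMin (hJ : ∀ t x, HasFDerivAt (J t) (e.G x - e.b t) x)
    {a c : ℝ} {u x : E} (hc : c ∈ Set.Icc 0 e.T) (hu : u ∈ Metric.closedBall (e.y c) e.Δ)
    (hx : x ∈ Metric.closedBall (e.y c) e.Δ) (hstable : IsStable e.ρ (e.G u - e.b a))
    (hmin : IncrementalMin (J c) ι e.ρ τ u x) : e.κ * ‖x - u‖ ≤ ‖e.b c - e.b a‖ :=
  hmin.mul_norm_sub_le e.sublinear (hJ c x) hstable (e.mul_norm_sub_sq_le_symmBregman hc hx hu)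

lemma ErrorBudget.of_incrementalMin (hτ : AdmissibleStepSize e J ι τ)
    (hJ : ∀ t x, HasFDerivAt (J t) (e.G x - e.b t) x) (hι : ∀ w, ‖ι w‖ ≤ ‖w‖)
    (hb : LipschitzOnWith K₀ e.b (Set.Icc 0 e.T)) (hK₀ : K₀ < e.κ) {a c : ℝ} {u x : E}
    (ha : 0 ≤ a) (hac : a < c) (hcT : c ≤ e.T) (hcτ : c - a ≤ τ) (hE : e.ErrorBudget τ a u)
    (hu : ‖u - e.y a‖ ≤ e.errorConstant * τ) (hmin : IncrementalMin (J c) ι e.ρ τ u x) :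
    e.ErrorBudget τ c x ∧ ‖x - e.y c‖ ≤ e.errorConstant * τ ∧ ‖x - u‖ < τ := by
  have haT : a ∈ Set.Icc 0 e.T := ⟨ha, hac.le.trans hcT⟩
  have hcI : c ∈ Set.Icc 0 e.T := ⟨ha.trans hac.le, hcT⟩
  have hstable : IsStable e.ρ (e.G u - e.b a) := by
    obtain ⟨v, -, hv, -⟩ := hE
    exact hv.stable
  have hu_near : ∀ t ∈ Set.Icc a c, ‖u - e.y t‖ ≤ e.Δ / 2 + e.Δ / 4 := fun t ht =>
    (e.norm_sub_path_le (τ := τ) haT ⟨ha.trans ht.1, ht.2.trans hcT⟩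
      (abs_le.2 ⟨by linarith [ht.2], by linarith [ht.1, hτ.pos]⟩) (hu.trans hτ.error_le)).trans
      (by linarith [hτ.path_le])
  have hu_tube : ∀ t ∈ Set.Icc a c, u ∈ Metric.closedBall (e.y t) e.Δ := fun t ht =>
    mem_closedBall_iff_norm.2 ((hu_near t ht).trans (by linarith [e.Δ_pos]))
  have hxu_small := hτ.step_le a haT c hcI u
    (e.tube_subset a haT (hu_tube a (Set.left_mem_Icc.2 hac.le))) x hstable hmin
  have hx_tube : ∀ t ∈ Set.Icc a c, x ∈ Metric.closedBall (e.y t) e.Δ := fun t ht =>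
    mem_closedBall_iff_norm.2 ((norm_sub_le_norm_sub_add_norm_sub x u _).trans
      (by linarith [hu_near t ht]))
  have hc := Set.right_mem_Icc.2 hac.le
  have increment_lt : ‖x - u‖ < c - a := by
    have h := e.mul_norm_sub_le_of_incrementalMin hJ hcI (hu_tube c hc) (hx_tube c hc) hstable hmin
    have hload := hb.norm_sub_le hcI haT
    rw [Real.norm_of_nonneg (sub_pos.2 hac).le] at hload
    exact lt_of_mul_lt_mul_left ((h.trans hload).trans_lt
      (mul_lt_mul_of_pos_right hK₀ (sub_pos.2 hac))) e.κ_pos.le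
  have flow := hmin.flowRule e.sublinear (hJ c x) ((hι _).trans_lt (increment_lt.trans_le hcτ))
  have step := DiscreteStep.of_flowRule e ha hac hcT hstable flow increment_lt.le hu_tube hx_tube
  have budget := hE.step step hcτ
  rw [smul_inv_smul₀ (sub_pos.2 hac).ne', add_sub_cancel] at budget
  exact ⟨budget, budget.norm_sub_le hτ.pos.le hcI (hx_tube c hc), increment_lt.trans_le hcτ⟩

end UniformlyConvexEvolution

namespace LocalScheme

lemma state_one (h : LocalScheme e J ι τ t z) (hτ : AdmissibleStepSize e J ι τ)
    (hJ : ∀ t x, HasFDerivAt (J t) (e.G x - e.b t) x) : z 1 = e.y 0 := by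
  have h0 : (0 : ℝ) ∈ Set.Icc 0 e.T := Set.left_mem_Icc.2 e.T_pos.le
  have hmin := h.incrementalMin 0
  rw [h.time_zero, h.state_zero, zero_add] at hmin
  have hstable := e.isStable_path h0
  have hsmall := hτ.step_le 0 h0 0 h0 _ (e.path_mem h0) _ hstable hmin
  have hle := e.mul_norm_sub_le_of_incrementalMin hJ h0 (e.path_mem_closedBall 0)
    (mem_closedBall_iff_norm.2 (hsmall.trans (by linarith [e.Δ_pos]))) hstable hmin
  rw [sub_self, norm_zero] at hle
  exact sub_eq_zero.1 (norm_le_zero_iff.1 (nonpos_of_mul_nonpos_right hle e.κ_pos))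

lemma errorBudget (h : LocalScheme e J ι τ t z) (hτ : AdmissibleStepSize e J ι τ)
    (hJ : ∀ t x, HasFDerivAt (J t) (e.G x - e.b t) x) (hι : ∀ w, ‖ι w‖ ≤ ‖w‖)
    (hb : LipschitzOnWith K₀ e.b (Set.Icc 0 e.T)) (hK₀ : K₀ < e.κ) (k : ℕ) (hk : t k < e.T) :
    0 ≤ t k ∧ e.ErrorBudget τ (t k) (z (k + 1)) ∧
      ‖z (k + 1) - e.y (t k)‖ ≤ e.errorConstant * τ ∧ ‖z (k + 1) - z k‖ < τ := by
  induction k with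
  | zero =>
    rw [h.time_zero, zero_add, h.state_one hτ hJ, h.state_zero, sub_self, norm_zero]
    exact ⟨le_rfl, e.errorBudget_initial τ, mul_nonneg (Real.sqrt_nonneg _) hτ.pos.le, hτ.pos⟩
  | succ k ih =>
    have time_succ : t (k + 1) = t k + τ - ‖ι (z (k + 1) - z k)‖ := by
      have := h.time_succ k
      grind
    have hkT : t k < e.T := by
      by_contra! hT
      have := (h.incrementalMin k).norm_le
      linarith
    obtain ⟨time_nonneg, budget, error_le, increment_lt⟩ := ih hkT
    have := (hι _).trans_lt increment_lt
    have := norm_nonneg (ι (z (k + 1) - z k))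
    have hlt : t k < t (k + 1) := by linarith
    exact ⟨time_nonneg.trans hlt.le, budget.of_incrementalMin hτ hJ hι hb hK₀ time_nonneg hlt hk.le
      (by linarith) error_le (h.incrementalMin (k + 1))⟩

theorem norm_interpolant_sub_le (h : LocalScheme e J ι τ t z) (hτ : AdmissibleStepSize e J ι τ)
    (hJ : ∀ t x, HasFDerivAt (J t) (e.G x - e.b t) x) (hι : ∀ w, ‖ι w‖ ≤ ‖w‖)
    (hb : LipschitzOnWith K₀ e.b (Set.Icc 0 e.T)) (hK₀ : K₀ < e.κ) {k : ℕ} (hk : t k < e.T) {s : ℝ}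
    (hs : s ∈ Set.Icc (t k) (t (k + 1))) :
    ‖z k + ((s - t k) / (t (k + 1) - t k)) • (z (k + 1) - z k) - e.y s‖ ≤
      (e.errorConstant + 1 + e.L) * τ := by
  obtain ⟨time_nonneg, -, error_le, increment_lt⟩ := h.errorBudget hτ hJ hι hb hK₀ k hk
  have time_succ := h.time_succ k
  have hsT : s ≤ e.T := hs.2.trans (time_succ.trans_le (min_le_right _ _))
  have hsτ : s - t k ≤ τ := by
    linarith [hs.2.trans (time_succ.trans_le (min_le_left _ _)),
      norm_nonneg (ι (z (k + 1) - z k))]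
  have hleft := e.norm_sub_path_le (τ := τ) ⟨time_nonneg, hk.le⟩ ⟨time_nonneg.trans hs.1, hsT⟩
    (abs_le.2 ⟨by linarith, by linarith [hs.1, hτ.pos]⟩) error_le
  set θ := (s - t k) / (t (k + 1) - t k)
  have hθ : |1 - θ| ≤ 1 := by
    have h0 : 0 ≤ θ := div_nonneg (sub_nonneg.2 hs.1) (sub_nonneg.2 (hs.1.trans hs.2))
    have h1 : θ ≤ 1 := div_le_one_of_le₀ (sub_le_sub_right hs.2 _) (sub_nonneg.2 (hs.1.trans hs.2))
    exact abs_le.2 ⟨by linarith, by linarith⟩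
  calc ‖z k + θ • (z (k + 1) - z k) - e.y s‖
      = ‖(z (k + 1) - e.y s) - (1 - θ) • (z (k + 1) - z k)‖ := by congr 1; module
    _ ≤ (e.errorConstant * τ + e.L * τ) + 1 * τ := by
        refine norm_sub_le_of_le hleft ?_
        rw [norm_smul, Real.norm_eq_abs]
        exact mul_le_mul hθ increment_lt.le (norm_nonneg _) zero_le_one
    _ = (e.errorConstant + 1 + e.L) * τ := by ring

end LocalScheme

end Scheme

end Evolution

section SemilinearEnergy

variable {E W : Type*} [NormedAddCommGroup E] [NormedAddCommGroup W]

/-- Maps that are bounded on every ball, hence on every bounded set. -/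
def BoundedOnBalls (f : E → W) : Prop :=
  ∀ r, ∃ M, ∀ x, ‖x‖ ≤ r → ‖f x‖ ≤ M

lemma BoundedOnBalls.of_growth {f : E → W} {C q : ℝ} (hC : 0 ≤ C) (hq : 0 ≤ q)
    (hf : ∀ x, ‖f x‖ ≤ C * (1 + ‖x‖ ^ q)) : BoundedOnBalls f :=
  fun r => ⟨C * (1 + r ^ q), fun x hx => (hf x).trans (by gcongr)⟩

variable [NormedSpace ℝ E] [NormedSpace ℝ W]

namespace BoundedOnBalls

lemma of_hasFDerivAt {f : E → W} {f' : E → E →L[ℝ] W} (hf' : BoundedOnBalls f')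
    (hf : ∀ x, HasFDerivAt f (f' x) x) : BoundedOnBalls f := by
  intro r
  obtain ⟨M, hM⟩ := hf' r
  refine ⟨‖f 0‖ + M * r, fun x hx => ?_⟩
  have hr : 0 ≤ r := (norm_nonneg x).trans hx
  have hM0 : 0 ≤ M := (norm_nonneg (f' x)).trans (hM x hx)
  have h := (convex_closedBall (0 : E) r).norm_image_sub_le_of_norm_hasFDerivWithin_le
    (fun m _ => (hf m).hasFDerivWithinAt) (fun m hm => hM m (mem_closedBall_zero_iff.1 hm))
    (Metric.mem_closedBall_self hr) (mem_closedBall_zero_iff.2 hx)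
  rw [sub_zero] at h
  calc ‖f x‖ ≤ ‖f 0‖ + ‖f x - f 0‖ := norm_le_norm_add_norm_sub' _ _
    _ ≤ ‖f 0‖ + M * r := by gcongr; exact h.trans (by gcongr)

lemma comp_clm {f : E → W →L[ℝ] ℝ} (hf : BoundedOnBalls f) (ι : E →L[ℝ] W) :
    BoundedOnBalls fun x => (f x).comp ι := by
  intro r
  obtain ⟨M, hM⟩ := hf r
  refine ⟨M * ‖ι‖, fun x hx => ((f x).opNorm_comp_le ι).trans ?_⟩
  gcongr
  exact hM x hx

end BoundedOnBalls

/-- The derivative `Az + D_zF(z)` of the time-independent part of the energy. -/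
def gradient (A : E →L[ℝ] E →L[ℝ] ℝ) (DF : E → W →L[ℝ] ℝ) (ι : E →L[ℝ] W) (x : E) : E →L[ℝ] ℝ :=
  A x + (DF x).comp ι

/-- The second derivative `A + D²_zF(z)` of the energy. -/
def hessian (A : E →L[ℝ] E →L[ℝ] ℝ) (D2F : E → E →L[ℝ] W →L[ℝ] ℝ) (ι : E →L[ℝ] W) (x : E) :
    E →L[ℝ] E →L[ℝ] ℝ :=
  A + (ι.precomp ℝ).comp (D2F x)

variable {A : E →L[ℝ] E →L[ℝ] ℝ} {F : E → ℝ} {DF : E → W →L[ℝ] ℝ} {D2F : E → E →L[ℝ] W →L[ℝ] ℝ}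
  {ι : E →L[ℝ] W}

lemma hessian_apply (x v w : E) : hessian A D2F ι x v w = A v w + D2F x v (ι w) :=
  rfl

lemma hasFDerivAt_comp_clm {x : E} (hDF : HasFDerivAt DF (D2F x) x) :
    HasFDerivAt (fun x => (DF x).comp ι) ((ι.precomp ℝ).comp (D2F x)) x :=
  ((ι.precomp ℝ).hasFDerivAt (x := DF x)).comp x hDF

lemma hasFDerivAt_gradient {x : E} (hDF : HasFDerivAt DF (D2F x) x) :
    HasFDerivAt (gradient A DF ι) (hessian A D2F ι x) x :=
  A.hasFDerivAt.add (hasFDerivAt_comp_clm hDF)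

lemma hessian_symm (hA : ∀ v w, A v w = A w v) (hF : ∀ x, HasFDerivAt F ((DF x).comp ι) x)
    {x : E} (hDF : HasFDerivAt DF (D2F x) x) (v w : E) :
    hessian A D2F ι x v w = hessian A D2F ι x w v := by
  have h := second_derivative_symmetric hF (hasFDerivAt_comp_clm hDF) v w
  rw [hessian_apply, hessian_apply, hA v w]
  exact congrArg (A w v + ·) h

end SemilinearEnergy

section DifferentialSolution

open Filter Topology

variable {E W : Type*} [NormedAddCommGroup E] [InnerProductSpace ℝ E]
  [NormedAddCommGroup W]

lemma opNorm_le_of_forall_abs_apply_self_le {B : E →L[ℝ] E →L[ℝ] ℝ} (hB : ∀ v w, B v w = B w v)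
    {c : ℝ} (hc : 0 ≤ c) (h : ∀ v, |B v v| ≤ c * ‖v‖ ^ 2) : ‖B‖ ≤ c := by
  refine ContinuousLinearMap.opNorm_le_of_unit_norm hc fun v hv =>
    ContinuousLinearMap.opNorm_le_of_unit_norm hc fun w hw => ?_
  have parallelogram := parallelogram_law_with_norm ℝ v w
  rw [hv, hw] at parallelogram
  have polarization : 4 * B v w = B (v + w) (v + w) - B (v - w) (v - w) := by
    simp only [map_add, map_sub, add_apply, sub_apply, hB w v]
    ring
  have hsum : c * ‖v + w‖ ^ 2 + c * ‖v - w‖ ^ 2 = 4 * c := by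
    linear_combination c * parallelogram
  have hadd := abs_le.1 (h (v + w))
  have hsub := abs_le.1 (h (v - w))
  rw [Real.norm_eq_abs, abs_le]
  constructor <;> linarith

section Hessian

variable [NormedSpace ℝ W] {A : E →L[ℝ] E →L[ℝ] ℝ} {D2F : E → E →L[ℝ] W →L[ℝ] ℝ} {ι : E →L[ℝ] W}

lemma lipschitzOnWith_hessian {s : Set E} {C : ℝ≥0}
    (hsymm : ∀ x v w, hessian A D2F ι x v w = hessian A D2F ι x w v)
    (hC : ∀ x ∈ s, ∀ w ∈ s, ∀ v, D2F x v (ι v) - D2F w v (ι v) ≤ C * ‖x - w‖ * ‖v‖ ^ 2) :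
    LipschitzOnWith C (hessian A D2F ι) s := by
  refine LipschitzOnWith.of_dist_le_mul fun x hx w hw => ?_
  rw [dist_eq_norm, dist_eq_norm]
  refine opNorm_le_of_forall_abs_apply_self_le (fun v v' => ?_) (by positivity) fun v => ?_
  · rw [sub_apply, sub_apply, sub_apply, sub_apply, hsymm x v v', hsymm w v v']
  · have hxw := hC x hx w hw v
    have hwx := hC w hw x hx v
    rw [norm_sub_rev] at hwx
    rw [sub_apply, sub_apply, hessian_apply, hessian_apply, abs_le]
    constructor <;> linarith

end Hessian

variable [InnerProductSpace ℝ W] {A : E →L[ℝ] E →L[ℝ] ℝ} {F : E → ℝ} {DF : E → W →L[ℝ] ℝ}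
  {D2F : E → E →L[ℝ] W →L[ℝ] ℝ} {R : W → ℝ} {ℓ : ℝ → W →L[ℝ] ℝ} {ι : E →L[ℝ] W}

lemma hasFDerivAt_energy {t : ℝ} {x : E} (hA : ∀ v w, A v w = A w v)
    (hF : HasFDerivAt F ((DF x).comp ι) x) :
    HasFDerivAt (energy A F ℓ ι t) (gradient A DF ι x - (ℓ t).comp ι) x := by
  have quadratic := (A.hasFDerivAt.clm_apply (hasFDerivAt_id x)).const_mul (1 / 2 : ℝ)
  refine ((quadratic.add hF).sub ((ℓ t).comp ι).hasFDerivAt).congr_fderiv ?_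
  ext w
  simp [gradient, hA w x]
  ring

section StepBound

variable {ρ : E → ℝ} {α M τ a c : ℝ} {u x : E}

lemma norm_le_of_energy_le (hα : 0 < α) (hA : ∀ w, α * ‖w‖ ^ 2 ≤ A w w) (hF : 0 ≤ F x)
    (hℓ : ‖ℓ c‖ ≤ M) {B : ℝ} (h : energy A F ℓ ι c x ≤ B) :
    ‖x‖ ≤ max 1 (2 * (M * ‖ι‖ + |B|) / α) := by
  rcases le_total ‖x‖ 1 with hx | hx
  · exact hx.trans (le_max_left _ _)
  refine le_max_of_le_right ((le_div_iff₀ hα).2 ?_)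
  have load_le : ℓ c (ι x) ≤ M * (‖ι‖ * ‖x‖) := apply_le_mul_of_norm_le hℓ (ι.le_opNorm x)
  have hB : B ≤ |B| * ‖x‖ := (le_abs_self B).trans (le_mul_of_one_le_right (abs_nonneg B) hx)
  have quadratic_le : α * ‖x‖ ^ 2 ≤ 2 * (M * ‖ι‖ + |B|) * ‖x‖ := by
    have := hA x
    unfold energy at h
    linarith
  refine le_of_mul_le_mul_right ?_ (one_pos.trans_le hx)
  linarith [sq ‖x‖]

-- Minimality against `u` and stability of `u` both contain `ρ (x - u)`, which cancels.
lemma IncrementalMin.mul_norm_sub_sq_le (hA : ∀ v w, A v w = A w v)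
    (hcoer : ∀ w, α * ‖w‖ ^ 2 ≤ A w w) (hF : ∀ m, HasFDerivAt F ((DF m).comp ι) m)
    (hρ : IsSublinear ρ) (hstable : IsStable ρ (gradient A DF ι u - (ℓ a).comp ι))
    (hmin : IncrementalMin (energy A F ℓ ι c) ι ρ τ u x) {M' : ℝ}
    (hDF : ∀ m ∈ segment ℝ u x, ‖DF m‖ ≤ M') (ha : ‖ℓ a‖ ≤ M) (hc : ‖ℓ c‖ ≤ M) :
    α / 2 * ‖x - u‖ ^ 2 ≤ 2 * (M' + M) * τ := by
  obtain ⟨m, hm, mean_value⟩ := domain_mvt (fun m _ => (hF m).hasFDerivWithinAt)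
    (convex_segment u x) (left_mem_segment ℝ u x) (right_mem_segment ℝ u x)
  have hle := hmin.le_of_norm_le u (by simpa using (norm_nonneg _).trans hmin.norm_le)
  have hu := hstable (x - u)
  have hDFι : (DF u - DF m) (ι (x - u)) ≤ (M' + M') * τ := apply_le_mul_of_norm_le
    (norm_sub_le_of_le (hDF u (left_mem_segment ℝ u x)) (hDF m hm)) hmin.norm_le
  have hℓι : (ℓ c - ℓ a) (ι (x - u)) ≤ (M + M) * τ :=
    apply_le_mul_of_norm_le (norm_sub_le_of_le hc ha) hmin.norm_le
  have symm := hA x u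
  have hcoer := hcoer (x - u)
  rw [sub_self, hρ.map_zero] at hle
  simp only [energy, gradient, ContinuousLinearMap.comp_apply, sub_apply, add_apply, map_sub]
    at hle hu hDFι hℓι hcoer mean_value
  linarith

lemma exists_norm_le_of_incrementalMin (hα : 0 < α) (hcoer : ∀ w, α * ‖w‖ ^ 2 ≤ A w w)
    (hF0 : ∀ m, 0 ≤ F m) (hF : ∀ m, HasFDerivAt F ((DF m).comp ι) m) (hDF : BoundedOnBalls DF)
    (hρ : IsSublinear ρ) (hρ0 : ∀ w, 0 ≤ ρ w) (r M : ℝ) :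
    ∃ r', ∀ τ c u x, ‖ℓ c‖ ≤ M → ‖u‖ ≤ r → IncrementalMin (energy A F ℓ ι c) ι ρ τ u x →
      ‖x‖ ≤ r' := by
  obtain ⟨MF, hMF⟩ := (hDF.comp_clm ι).of_hasFDerivAt hF r
  refine ⟨_, fun τ c u x hc hu hmin => norm_le_of_energy_le (ι := ι) hα hcoer (hF0 x) hc
    (B := 1 / 2 * (‖A‖ * r * r) + MF + M * (‖ι‖ * r)) ?_⟩
  have energy_le : energy A F ℓ ι c x ≤ energy A F ℓ ι c u := by
    have hle := hmin.le_of_norm_le u (by simpa using (norm_nonneg _).trans hmin.norm_le)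
    rw [sub_self, hρ.map_zero] at hle
    linarith [hρ0 (x - u)]
  have quadratic_le : A u u ≤ ‖A‖ * r * r :=
    apply_le_mul_of_norm_le (A.le_of_opNorm_le_of_le le_rfl hu) hu
  have load_le : (-ℓ c) (ι u) ≤ M * (‖ι‖ * r) :=
    apply_le_mul_of_norm_le ((norm_neg _).trans_le hc) (ι.le_of_opNorm_le_of_le le_rfl hu)
  have F_le := (le_abs_self _).trans (hMF u hu)
  rw [neg_apply] at load_le
  unfold energy at energy_le ⊢
  linarith

lemma eventually_forall_incrementalMin_norm_sub_le (hA : ∀ v w, A v w = A w v) (hα : 0 < α)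
    (hcoer : ∀ w, α * ‖w‖ ^ 2 ≤ A w w) (hF0 : ∀ m, 0 ≤ F m)
    (hF : ∀ m, HasFDerivAt F ((DF m).comp ι) m) (hDF : BoundedOnBalls DF) (hρ : IsSublinear ρ)
    (hρ0 : ∀ w, 0 ≤ ρ w) (r M : ℝ) {ε : ℝ} (hε : 0 < ε) :
    ∀ᶠ τ in 𝓝[>] 0, ∀ a c u x, ‖ℓ a‖ ≤ M → ‖ℓ c‖ ≤ M → ‖u‖ ≤ r →
      IsStable ρ (gradient A DF ι u - (ℓ a).comp ι) →
      IncrementalMin (energy A F ℓ ι c) ι ρ τ u x → ‖x - u‖ ≤ ε := by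
  obtain ⟨r', hr'⟩ := exists_norm_le_of_incrementalMin (ℓ := ℓ) hα hcoer hF0 hF hDF hρ hρ0 r M
  obtain ⟨M', hM'⟩ := hDF (max r r')
  have rhs_tendsto : Tendsto (fun τ => 2 * (M' + M) * τ) (𝓝[>] 0) (𝓝 0) :=
    ((continuous_const_mul _).tendsto' 0 0 (mul_zero _)).mono_left nhdsWithin_le_nhds
  filter_upwards [rhs_tendsto.eventually_le_const (show 0 < α / 2 * ε ^ 2 by positivity)]
    with τ hτ a c u x ha hc hu hstable hmin
  have segment_subset : segment ℝ u x ⊆ Metric.closedBall 0 (max r r') :=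
    (convex_closedBall 0 _).segment_subset
      (mem_closedBall_zero_iff.2 (hu.trans (le_max_left _ _)))
      (mem_closedBall_zero_iff.2 ((hr' τ c u x hc hu hmin).trans (le_max_right _ _)))
  have h := hmin.mul_norm_sub_sq_le hA hcoer hF hρ hstable
    (fun m hm => hM' m (mem_closedBall_zero_iff.1 (segment_subset hm))) ha hc
  exact le_of_sq_le_sq (le_of_mul_le_mul_left (h.trans hτ) (half_pos hα)) hε.le

end StepBound

lemma flowRule_of_mem_subdiff {ξ : W →L[ℝ] ℝ} {σ : E →L[ℝ] ℝ} {v : E} (hR : IsSublinear R)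
    (hξ : ξ ∈ subdiff R (ι v)) (h : ξ.comp ι + σ = 0) : FlowRule (fun w => R (ι w)) σ v := by
  have σ_apply (w : E) : σ w = -ξ (ι w) := eq_neg_of_add_eq_zero_right (DFunLike.congr_fun h w)
  refine ⟨fun w => ?_, ?_⟩
  · have h_add := hξ (ι v + ι w)
    rw [add_sub_cancel_left] at h_add
    linarith [σ_apply w, hR.add_le (ι v) (ι w)]
  · have h_zero := hξ 0
    have h_double := hξ ((2 : ℝ) • ι v)
    rw [hR.map_zero, zero_sub, map_neg] at h_zero
    rw [hR.smul_of_nonneg 2 _ zero_le_two, two_smul, add_sub_cancel_right] at h_double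
    linarith [σ_apply v]

lemma IsDiffSol.ae_flowRule [CompleteSpace E] {T : ℝ} {z₀ : E} {y : ℝ → E}
    (hy : IsDiffSol A DF ℓ R ι T z₀ y) (hT : 0 ≤ T) (hR : IsSublinear R) :
    ∀ᵐ s : ℝ, s ∈ Set.Ioo 0 T → ∃ v, HasDerivAt y v s ∧
      FlowRule (fun w => R (ι w)) (gradient A DF ι (y s) - (ℓ s).comp ι) v := by
  obtain ⟨-, y', y'_integrable, y_eq, inclusion⟩ := hy
  rw [ae_restrict_iff' measurableSet_Ioo] at inclusion
  filter_upwards [y'_integrable.ae_hasDerivAt_integral, inclusion] with s deriv_integral hs_incl hs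
  obtain ⟨ξ, hξ, balance⟩ := hs_incl hs
  have hs' : s ∈ Set.uIcc 0 T := by
    rw [Set.uIcc_of_le hT]
    exact Set.Ioo_subset_Icc_self hs
  have y_eventuallyEq : y =ᶠ[𝓝 s] fun r => z₀ + ∫ q in (0 : ℝ)..r, y' q := by
    filter_upwards [Ioo_mem_nhds hs.1 hs.2] with r hr
    exact y_eq r (Set.Ioo_subset_Icc_self hr)
  exact ⟨y' s, ((deriv_integral hs' 0 Set.left_mem_uIcc).const_add z₀).congr_of_eventuallyEq
    y_eventuallyEq, flowRule_of_mem_subdiff hR hξ balance⟩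

end DifferentialSolution

section LocalError

open Filter Topology

lemma exists_forall_closedBall_subset_closedBall_zero {β E : Type*} [TopologicalSpace β]
    [SeminormedAddCommGroup E] {S : Set β} {y : β → E} (hS : IsCompact S) (hy : ContinuousOn y S)
    (Δ : ℝ) : ∃ r > 0, ∀ t ∈ S, Metric.closedBall (y t) Δ ⊆ Metric.closedBall 0 r := by
  obtain ⟨M, hM⟩ := hS.exists_bound_of_continuousOn hy
  refine ⟨max 1 (Δ + M), lt_max_of_lt_left one_pos, fun t ht =>
    Metric.closedBall_subset_closedBall' (le_max_of_le_right ?_)⟩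
  rw [dist_zero_right]
  exact add_le_add_right (hM t ht) Δ

lemma lipschitzWith_comp_clm {E W : Type*} [SeminormedAddCommGroup E] [NormedSpace ℝ E]
    [SeminormedAddCommGroup W] [NormedSpace ℝ W] {ι : E →L[ℝ] W} (hι : ∀ w, ‖ι w‖ ≤ ‖w‖) :
    LipschitzWith 1 fun f : W →L[ℝ] ℝ => f.comp ι := by
  refine LipschitzWith.of_dist_le_mul fun f g => ?_
  rw [NNReal.coe_one, dist_eq_norm, dist_eq_norm, ← ContinuousLinearMap.sub_comp, mul_comm]
  exact ((f - g).opNorm_comp_le ι).trans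
    (by gcongr; exact ι.opNorm_le_bound zero_le_one (by simpa using hι))

variable {E W : Type*} [NormedAddCommGroup E] [InnerProductSpace ℝ E]
  [NormedAddCommGroup W] [InnerProductSpace ℝ W] {A : E →L[ℝ] E →L[ℝ] ℝ} {F : E → ℝ}
  {DF : E → W →L[ℝ] ℝ} {D2F : E → E →L[ℝ] W →L[ℝ] ℝ} {R : W → ℝ} {ℓ ℓ' : ℝ → W →L[ℝ] ℝ}
  {ι : E →L[ℝ] W} {r T κ Δ α : ℝ} {C L Ly : ℝ≥0} {z₀ : E} {y : ℝ → E}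

/-- A differential solution around which the semilinear energy is uniformly convex, as an abstract
evolution. The set on which `D²_zI` is Lipschitz is a ball containing the tube around the
solution. -/
def semilinearEvolution [CompleteSpace E] (hT : 0 < T) (hκ : 0 < κ) (hΔ : 0 < Δ)
    (hι : ∀ w, ‖ι w‖ ≤ ‖w‖) (hR : IsSublinear R)
    (hA : ∀ v w, A v w = A w v) (hF : ∀ x, HasFDerivAt F ((DF x).comp ι) x)
    (hDF : ∀ x, HasFDerivAt DF (D2F x) x)
    (hD2F : ∀ x w v, ‖x‖ ≤ r → ‖w‖ ≤ r →
      D2F x v (ι v) - D2F w v (ι v) ≤ C * ‖x - w‖ * ‖v‖ ^ 2)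
    (hℓ' : ∀ t ∈ Set.Icc 0 T, HasDerivAt ℓ (ℓ' t) t)
    (hℓ'BV : BoundedVariationOn ℓ' (Set.Icc 0 T))
    (hy : IsDiffSol A DF ℓ R ι T z₀ y) (hyLip : LipschitzOnWith Ly y (Set.Icc 0 T))
    (htube : ∀ t ∈ Set.Icc 0 T, Metric.closedBall (y t) Δ ⊆ Metric.closedBall 0 r)
    (hconv : ∀ t ∈ Set.Icc 0 T, ∀ w, ‖w - y t‖ ≤ Δ →
      ∀ v, κ * ‖v‖ ^ 2 ≤ A v v + D2F w v (ι v)) :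
    UniformlyConvexEvolution E where
  G := gradient A DF ι
  H := hessian A D2F ι
  b t := (ℓ t).comp ι
  b' t := (ℓ' t).comp ι
  ρ w := R (ι w)
  y := y
  s := Metric.closedBall 0 r
  T := T
  κ := κ
  Δ := Δ
  C := C
  L := Ly
  T_pos := hT
  κ_pos := hκ
  Δ_pos := hΔ
  sublinear := hR.comp ι
  hasFDerivAt_force x := hasFDerivAt_gradient (hDF x)
  symm x := hessian_symm hA hF (hDF x)
  convex := convex_closedBall 0 r
  isBounded := Metric.isBounded_closedBall
  lipschitz_stiffness := lipschitzOnWith_hessian (fun x => hessian_symm hA hF (hDF x))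
    fun x hx w hw v => hD2F x w v (mem_closedBall_zero_iff.1 hx) (mem_closedBall_zero_iff.1 hw)
  hasDerivAt_load t ht :=
    ((ι.precomp ℝ).hasFDerivAt (x := ℓ t)).comp_hasDerivAt t (hℓ' t ht)
  boundedVariation := (lipschitzWith_comp_clm hι).comp_boundedVariationOn hℓ'BV
  lipschitz_path := hyLip
  tube_subset := htube
  coercive t ht x hx := hconv t ht x (mem_closedBall_iff_norm.1 hx)
  flow := hy.ae_flowRule hT.le hR

lemma Scheme.localScheme {e : UniformlyConvexEvolution E} {τ : ℝ} {t : ℕ → ℝ} {z : ℕ → E}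
    (h : Scheme A F R ℓ ι e.T τ (e.y 0) t z) (hρ : e.ρ = fun w => R (ι w)) :
    LocalScheme e (energy A F ℓ ι) ι τ t z where
  time_zero := h.1
  state_zero := h.2.1
  incrementalMin k := by
    obtain ⟨norm_le, le_of_norm_le, -⟩ := h.2.2 k
    rw [hρ]
    exact ⟨norm_le, le_of_norm_le⟩
  time_succ k := (h.2.2 k).2.2

lemma StandingAssumptions.boundedOnBalls {Y : Type*} [NormedAddCommGroup Y] [NormedSpace ℝ Y]
    {ιX : W →L[ℝ] Y} {c : ℝ} (h : StandingAssumptions ι ιX A α F DF D2F R ℓ c T) :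
    BoundedOnBalls DF := by
  obtain ⟨-, -, -, -, -, -, -, -, -, hDF, ⟨CF, q, hCF, hq, hD2F⟩, -⟩ := h
  have D2F_growth (w : E) : ‖D2F w‖ ≤ CF * (1 + ‖w‖ ^ q) :=
    (D2F w).opNorm_le_bound (by positivity) (hD2F w)
  exact .of_hasFDerivAt (.of_growth hCF.le (zero_le_one.trans hq) D2F_growth) hDF

theorem statement14_general [CompleteSpace E] (hι : ∀ w, ‖ι w‖ ≤ ‖w‖)
    (hA : ∀ v w, A v w = A w v) (hα : 0 < α) (hcoer : ∀ w, α * ‖w‖ ^ 2 ≤ A w w)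
    (hF0 : ∀ x, 0 ≤ F x)
    (hF : ∀ x, HasFDerivAt F ((DF x).comp ι) x) (hDF : ∀ x, HasFDerivAt DF (D2F x) x)
    (hDF_bdd : BoundedOnBalls DF)
    (hC21 : ∀ r : ℝ, 0 < r → ∃ C : ℝ, 0 ≤ C ∧ ∀ x w v, ‖x‖ ≤ r → ‖w‖ ≤ r →
      D2F x v (ι v) - D2F w v (ι v) ≤ C * ‖x - w‖ * ‖v‖ ^ 2)
    (hR : IsSublinear R) (hR0 : ∀ v, 0 ≤ R v) (hT : 0 < T)
    (hy : IsDiffSol A DF ℓ R ι T z₀ y) (hyLip : LipschitzOnWith Ly y (Set.Icc 0 T))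
    (hκ : 0 < κ) (hΔ : 0 < Δ)
    (hconv : ∀ t ∈ Set.Icc 0 T, ∀ w, ‖w - y t‖ ≤ Δ →
      ∀ v, κ * ‖v‖ ^ 2 ≤ A v v + D2F w v (ι v))
    (hℓ : LipschitzOnWith L ℓ (Set.Icc 0 T)) (hL : L < κ)
    (hℓ' : ∀ t ∈ Set.Icc 0 T, HasDerivAt ℓ (ℓ' t) t)
    (hℓ'BV : BoundedVariationOn ℓ' (Set.Icc 0 T)) :
    ∃ K > 0, ∃ τbar > 0, ∀ τ ∈ Set.Ioc 0 τbar, ∀ t z, Scheme A F R ℓ ι T τ z₀ t z →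
      ∀ k, t k < T → ∀ s ∈ Set.Icc (t k) (t (k + 1)),
        ‖z k + ((s - t k) / (t (k + 1) - t k)) • (z (k + 1) - z k) - y s‖ ≤ K * τ := by
  obtain ⟨r, hr, htube⟩ :=
    exists_forall_closedBall_subset_closedBall_zero isCompact_Icc hyLip.continuousOn Δ
  obtain ⟨C, hC0, hC⟩ := hC21 r hr
  lift C to ℝ≥0 using hC0
  obtain ⟨M, hM⟩ := isCompact_Icc.exists_bound_of_continuousOn hℓ.continuousOn
  let e := semilinearEvolution hT hκ hΔ hι hR hA hF hDF hC hℓ' hℓ'BV hy hyLip htube hconv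
  have small_steps := eventually_forall_incrementalMin_norm_sub_le (ℓ := ℓ) hA hα hcoer hF0 hF
    hDF_bdd (hR.comp ι) (fun w => hR0 (ι w)) r M (div_pos hΔ four_pos)
  have admissible : ∀ᶠ τ in 𝓝[>] 0, AdmissibleStepSize e (energy A F ℓ ι) ι τ := by
    refine AdmissibleStepSize.eventually (small_steps.mono fun τ hτ a ha c hc u hu x => ?_)
    exact hτ a c u x (hM a ha) (hM c hc) (mem_closedBall_zero_iff.1 hu)
  obtain ⟨τbar, hτbar, hτ⟩ := mem_nhdsGT_iff_exists_Ioc_subset.1 admissible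
  have errorConstant_nonneg : 0 ≤ e.errorConstant := Real.sqrt_nonneg _
  refine ⟨e.errorConstant + 1 + Ly, by positivity, τbar, hτbar, fun τ hτ' t z h k hk s hs => ?_⟩
  rw [← hy.1] at h
  have hlocal : LocalScheme e (energy A F ℓ ι) ι τ t z := h.localScheme rfl
  have load_lipschitz : LipschitzOnWith L e.b (Set.Icc 0 T) := by
    have h := (lipschitzWith_comp_clm hι).comp_lipschitzOnWith hℓ
    rwa [one_mul] at h
  exact hlocal.norm_interpolant_sub_le (hτ hτ') (fun t x => hasFDerivAt_energy hA (hF x)) hι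
    load_lipschitz hL hk hs

end LocalError

/-- Theorem 3.19: let `y ∈ C^{0,1}([0,T];Z)` be a differential
solution, let `I` be locally `κ`-uniformly convex around `y` with radius `Δ > 0`,
assume `ℓ ∈ W^{1,∞}` with `|ℓ|_Lip ≤ κ − δ` for some `δ ∈ (0,κ]`, `ℓ′ ∈ BV([0,T];V)`
and `I(t,·) ∈ C^{2,1}_loc(Z;ℝ)`. Then there are `K_loc > 0` and a threshold `τ̄ > 0`,
independent of `τ`, such that for all `τ ≤ τ̄` the back-transformed discrete
parameterized solution (the piecewise affine interpolant in physical time) satisfies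
`‖z_τ(s) − y(s)‖_Z ≤ K_loc τ` for all `s ∈ [0,T]`. -/
theorem statement14
    (ι : Z →L[ℝ] V) (ιX : V →L[ℝ] X)
    (A : Z →L[ℝ] Z →L[ℝ] ℝ) (α : ℝ) (F : Z → ℝ) (DF : Z → V →L[ℝ] ℝ)
    (D2F : Z → Z →L[ℝ] V →L[ℝ] ℝ) (R : V → ℝ) (ℓ : ℝ → V →L[ℝ] ℝ) (L T : ℝ)
    (hstand : StandingAssumptions ι ιX A α F DF D2F R ℓ L T)
    (hC21 : ∀ r : ℝ, 0 < r → ∃ Cr : ℝ, 0 ≤ Cr ∧ ∀ z₁ z₂ v : Z,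
      ‖z₁‖ ≤ r → ‖z₂‖ ≤ r →
      D2F z₁ v (ι v) - D2F z₂ v (ι v) ≤ Cr * ‖z₁ - z₂‖ * ‖v‖ ^ 2)
    (z₀ : Z)
    -- the differential solution `y ∈ C^{0,1}([0,T];Z)`:
    (y : ℝ → Z) (hy : IsDiffSol A DF ℓ R ι T z₀ y)
    (hyLip : ∃ Ly : ℝ≥0, LipschitzOnWith Ly y (Set.Icc (0 : ℝ) T))
    -- local `κ`-uniform convexity of `I` around `y` with radius `Δ`:
    (κ Δ : ℝ) (hκ : 0 < κ) (hΔ : 0 < Δ)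
    (hlocconv : ∀ s ∈ Set.Icc (0 : ℝ) T, ∀ w : Z, ‖w - y s‖ ≤ Δ →
      ∀ v : Z, κ * ‖v‖ ^ 2 ≤ A v v + D2F w v (ι v))
    (δ : ℝ) (hδ0 : 0 < δ) (hδκ : δ ≤ κ) (hLsmall : L ≤ κ - δ)
    (ℓ' : ℝ → V →L[ℝ] ℝ)
    (hℓ' : ∀ s ∈ Set.Icc (0 : ℝ) T, HasDerivAt ℓ (ℓ' s) s)
    (hℓ'BV : BoundedVariationOn ℓ' (Set.Icc (0 : ℝ) T))
    (t : ℝ → ℕ → ℝ) (z : ℝ → ℕ → Z)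
    (hscheme : ∀ τ : ℝ, 0 < τ → Scheme A F R ℓ ι T τ z₀ (t τ) (z τ))
    (N : ℝ → ℕ)
    (hN : ∀ τ : ℝ, 0 < τ → t τ (N τ) = T ∧ ∀ j : ℕ, j < N τ → t τ j < T) :
    ∃ Kloc τbar : ℝ, 0 < Kloc ∧ 0 < τbar ∧
      ∀ τ : ℝ, 0 < τ → τ ≤ τbar → ∀ k : ℕ, 1 ≤ k → k ≤ N τ →
        ∀ s ∈ Set.Icc (t τ (k - 1)) (t τ k),
          ‖(z τ (k - 1) + ((s - t τ (k - 1)) / (t τ k - t τ (k - 1))) •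
              (z τ k - z τ (k - 1))) - y s‖ ≤ Kloc * τ := by
  obtain ⟨Ly, hyLip⟩ := hyLip
  have hDF_bdd := hstand.boundedOnBalls
  obtain ⟨-, -, hι, -, hA, hα, hcoer, hF0, hF, hDF, -, hL, hℓ, hT, hRconv, -, hR0, hRhom,
    -⟩ := hstand
  obtain ⟨K, hK, τbar, hτbar, h⟩ := statement14_general hι hA hα hcoer hF0 hF hDF hDF_bdd hC21
    (.of_convexOn hRconv hRhom) hR0 hT hy hyLip hκ hΔ hlocconv hℓ
    (by rw [Real.coe_toNNReal L hL]; linarith) hℓ' hℓ'BV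
  refine ⟨K, τbar, hK, hτbar, fun τ hτ hτ_le k hk hkN s hs => ?_⟩
  obtain ⟨j, rfl⟩ := Nat.exists_eq_add_of_le' hk
  exact h τ ⟨hτ, hτ_le⟩ (t τ) (z τ) (hscheme τ hτ) j ((hN τ hτ).2 j hkN) s hs

end RIS
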